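/- arXiv:2204.06151 — 8 statements merged into one kernel-verified Lean document; each statement's English description precedes it below -/
import Mathlib

section
/- Suppose P satisfies axioms (P6) and (H0). Then there exists a constant D_1 > 0 such that for every generator s ∈ S and every reduced P-product u = (u_1,…,u_k) with u_1⋯u_k = s in G, every path in Γ(G,S) defined by u based at 1 has diameter at most D_1. -/
open Metric Set

section Pregroup

variable {G : Type*} [Group G]

/-- A reduced `P`-product: a nonempty tuple of elements of `P` such that no two
consecutive entries multiply into `P`. -/
def IsReducedProd (P : Set G) (u : List G) : Prop :=
  u ≠ [] ∧ (∀ x ∈ u, x ∈ P) ∧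
    ∀ i : ℕ, ∀ h : i + 1 < u.length, u[i]'(Nat.lt_of_succ_lt h) * u[i + 1]'h ∉ P

/-- `G` has a pregroup structure with respect to the subset `P ⊆ G`. -/
structure IsPregroupStructure (P : Set G) : Prop where
  one_mem : (1 : G) ∈ P
  inv_mem : ∀ x ∈ P, x⁻¹ ∈ P
  p5 : ∀ u ∈ P, ∀ v ∈ P, ∀ w ∈ P, ∀ z ∈ P,
    u * v ∈ P → v * w ∈ P → w * z ∈ P → u * v * w ∈ P ∨ v * w * z ∈ P
  exists_rep : ∀ g : G, ∃ u : List G, IsReducedProd P u ∧ u.prod = g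
  uniq : ∀ u v : List G, IsReducedProd P u → IsReducedProd P v → u.prod = v.prod →
    u.length = v.length ∧
      ∃ a : ℕ → G, a 0 = 1 ∧ a u.length = 1 ∧
        (∀ i : ℕ, 0 < i → i < u.length → a i ∈ P) ∧
        ∀ i : ℕ, ∀ hu : i < u.length, ∀ hv : i < v.length,
          (a i)⁻¹ * u[i] * a (i + 1) ∈ P ∧ v[i] = (a i)⁻¹ * u[i] * a (i + 1)

/-- `B_P = {b ∈ P : zb ∈ P and bz ∈ P for all z ∈ P}`. -/
def BP (P : Set G) : Set G :=
  {b | b ∈ P ∧ ∀ z ∈ P, z * b ∈ P ∧ b * z ∈ P}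

/-- Axiom (P6). -/
def AxiomP6 (P : Set G) : Prop :=
  ∀ x ∈ P, ∀ y ∈ P, x * y ∉ P → ∀ a ∈ P, x * a ∈ P → a⁻¹ * y ∈ P → a ∈ BP P

/-- Axiom (H0): `B_P` is finite. -/
def AxiomH0 (P : Set G) : Prop := (BP P).Finite

end Pregroup

section Geometry

variable {X : Type*} [MetricSpace X]

/-- A geodesic parametrization (by arclength on `[0, dist x y]`) from `x` to `y`. -/
def IsGeodesicParam (f : ℝ → X) (x y : X) : Prop :=
  f 0 = x ∧ f (dist x y) = y ∧
    ∀ a ∈ Icc (0 : ℝ) (dist x y), ∀ b ∈ Icc (0 : ℝ) (dist x y),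
      dist (f a) (f b) = |a - b|

/-- `s` is a geodesic segment from `x` to `y`. -/
def IsGeodesicSegment (s : Set X) (x y : X) : Prop :=
  ∃ f : ℝ → X, IsGeodesicParam f x y ∧ s = f '' Icc (0 : ℝ) (dist x y)

/-- A geodesic metric space: any two points are joined by a geodesic segment. -/
def IsGeodesicSpace (X : Type*) [MetricSpace X] : Prop :=
  ∀ x y : X, ∃ s : Set X, IsGeodesicSegment s x y

/-- A triangle with sides `s, t, r` is `C`-thin: each side lies in the closed
`C`-neighborhood of the union of the other two sides. -/
def ThinTriangle (C : ℝ) (s t r : Set X) : Prop :=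
  s ⊆ cthickening C (t ∪ r) ∧ t ⊆ cthickening C (s ∪ r) ∧ r ⊆ cthickening C (s ∪ t)

end Geometry

section Cayley

variable {G : Type*} [Group G] {X : Type*} [MetricSpace X]

/-- The word length of `g` with respect to the generating set `S`. -/
noncomputable def wordLength (S : Set G) (g : G) : ℕ :=
  sInf {n | ∃ l : List G, l.length = n ∧ (∀ x ∈ l, x ∈ S ∨ x⁻¹ ∈ S) ∧ l.prod = g}

/-- `ι : G → X` realizes the geodesic metric space `X` as the Cayley graph
`Γ(G,S)`: `S` generates `G`, the metric on vertices is the word metric, `X` is a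
geodesic space, and every point of `X` is within `1/2` of a vertex. -/
structure IsCayleyGraph (S : Set G) (ι : G → X) : Prop where
  generates : Subgroup.closure S = ⊤
  dist_eq : ∀ g h : G, dist (ι g) (ι h) = wordLength S (g⁻¹ * h)
  geodesic : IsGeodesicSpace X
  dense : ∀ x : X, ∃ g : G, dist x (ι g) ≤ 1 / 2

/-- Axiom (H1), with constant `C₁`: geodesic triangles on vertices `1, p, pq`
(`p, q ∈ P`) are `C₁`-thin. -/
def AxiomH1 (P : Set G) (ι : G → X) (C₁ : ℝ) : Prop :=
  ∀ p ∈ P, ∀ q ∈ P, ∀ s t r : Set X,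
    IsGeodesicSegment s (ι 1) (ι p) → IsGeodesicSegment t (ι p) (ι (p * q)) →
      IsGeodesicSegment r (ι 1) (ι (p * q)) → ThinTriangle C₁ s t r

/-- Axiom (H2), with constant `C₂`: if the Gromov product `(p⁻¹ · q)_1` exceeds
`C₂` then `pq ∈ P`. -/
def AxiomH2 (P : Set G) (ι : G → X) (C₂ : ℝ) : Prop :=
  ∀ p ∈ P, ∀ q ∈ P,
    (dist (ι 1) (ι p) + dist (ι 1) (ι q) - dist (ι p⁻¹) (ι q)) / 2 > C₂ → p * q ∈ P

/-- Axiom (H3), with constant `C₃`: every vertex on a geodesic from `1` to `p ∈ P`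
is a reduced product `p₁ p₂` with `|p₂| ≤ C₃`. -/
def AxiomH3 (P : Set G) (ι : G → X) (C₃ : ℝ) : Prop :=
  ∀ p ∈ P, ∀ s : Set X, IsGeodesicSegment s (ι 1) (ι p) →
    ∀ x : G, ι x ∈ s →
      ∃ p₁ p₂ : G, IsReducedProd P [p₁, p₂] ∧ p₁ * p₂ = x ∧ dist (ι 1) (ι p₂) ≤ C₃

/-- The path in `Γ(G,S)` defined by the `P`-product `u` based at `x`: a
concatenation of geodesic segments `[x u(i), x u(i+1)]`. -/
def IsPathOf (ι : G → X) (x : G) (u : List G) (pa : Set X) : Prop :=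
  ∃ segs : Fin u.length → Set X,
    (∀ i : Fin u.length,
      IsGeodesicSegment (segs i)
        (ι (x * (u.take i.1).prod)) (ι (x * (u.take (i.1 + 1)).prod))) ∧
    pa = ⋃ i, segs i

end Cayley

theorem isReducedProd_iff {G : Type*} [Group G] (P : Set G) (u : List G) :
    IsReducedProd P u ↔
      u ≠ [] ∧ (∀ x ∈ u, x ∈ P) ∧ List.IsChain (fun x y => x * y ∉ P) u := by
  unfold IsReducedProd
  rw [List.isChain_iff_getElem]

/-- Key algebraic fact. -/
theorem prefix_mem {G : Type*} [Group G] (P : Set G) (hP : IsPregroupStructure P)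
    (hP6 : AxiomP6 P) (u v : List G) (hu : IsReducedProd P u) (hv : IsReducedProd P v)
    (h : v.prod = u.prod) (i : ℕ) :
    ∃ j ≤ v.length, ∃ b ∈ BP P, (u.take i).prod = (v.take j).prod * b := by
  have h1B : (1 : G) ∈ BP P := ⟨hP.one_mem, fun z hz => by simpa using hz⟩
  obtain ⟨hlen, a, ha0, han, haP, hrec⟩ := hP.uniq v u hv hu h
  have tele : ∀ i ≤ v.length, (u.take i).prod = (v.take i).prod * a i := by
    intro i
    induction i with
    | zero => intro _; simp [ha0]
    | succ i ih =>
      intro hi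
      have h1 : i < v.length := hi
      have h2 : i < u.length := hlen ▸ hi
      rw [List.prod_take_succ _ _ h1, List.prod_take_succ _ _ h2, ih h1.le, (hrec i h1 h2).2]
      group
  rcases Nat.eq_zero_or_pos i with rfl | hi0
  · exact ⟨0, Nat.zero_le _, 1, h1B, by simp⟩
  rcases Nat.lt_or_ge i v.length with hi | hi
  swap
  · exact ⟨v.length, le_rfl, 1, h1B, by
      rw [List.take_of_length_le (hlen ▸ hi), List.take_length, h, mul_one]⟩
  refine ⟨i, hi.le, a i, ?_, tele i hi.le⟩
  have hiu : i < u.length := hlen ▸ hi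
  have haiP := haP i hi0 hi
  have hu' := (isReducedProd_iff P u).1 hu
  have hv' := (isReducedProd_iff P v).1 hv
  obtain ⟨k, rfl⟩ : ∃ k, i = k + 1 := ⟨i - 1, by omega⟩
  have hk : k < v.length := by omega
  have hxP : v[k] ∈ P := hv.2.1 _ (List.getElem_mem _)
  have hyP : v[k + 1] ∈ P := hv.2.1 _ (List.getElem_mem _)
  refine hP6 v[k] hxP v[k + 1] hyP (hv.2.2 k hi) (a (k + 1)) haiP ?_ ?_
  · by_contra hcon
    have hr1 : IsReducedProd P (v.take (k + 1) ++ [a (k + 1)]) := by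
      rw [isReducedProd_iff]
      refine ⟨by simp, ?_, ?_⟩
      · intro x hx
        rcases List.mem_append.1 hx with hx | hx
        · exact hv'.2.1 x (List.mem_of_mem_take hx)
        · rw [List.mem_singleton.1 hx]; exact haiP
      · rw [List.isChain_append]
        refine ⟨hv'.2.2.take _, by simp, ?_⟩
        intro x hx y hy
        rw [List.take_succ_eq_append_getElem hk] at hx
        rw [List.getLast?_concat, Option.mem_some_iff] at hx
        simp at hy
        subst hx; subst hy
        exact hcon
    have hr2 : IsReducedProd P (u.take (k + 1)) := by
      rw [isReducedProd_iff]
      refine ⟨?_, fun x hx => hu'.2.1 x (List.mem_of_mem_take hx), hu'.2.2.take _⟩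
      intro h0
      have := congrArg List.length h0
      simp at this
      exact hu'.1 this
    have := (hP.uniq _ _ hr1 hr2 (by simpa using (tele _ hi.le).symm)).1
    simp at this
    omega
  · by_contra hcon
    have hr1 : IsReducedProd P ((a (k + 1))⁻¹ :: v.drop (k + 1)) := by
      rw [isReducedProd_iff]
      refine ⟨by simp, ?_, ?_⟩
      · intro x hx
        rcases List.mem_cons.1 hx with hx | hx
        · rw [hx]; exact hP.inv_mem _ haiP
        · exact hv'.2.1 x (List.mem_of_mem_drop hx)
      · rw [List.isChain_cons]
        refine ⟨?_, hv'.2.2.drop _⟩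
        intro y hy
        rw [List.drop_eq_getElem_cons hi] at hy
        rw [List.head?_cons, Option.mem_some_iff] at hy
        subst hy
        exact hcon
    have hr2 : IsReducedProd P (u.drop (k + 1)) := by
      rw [isReducedProd_iff]
      refine ⟨?_, fun x hx => hu'.2.1 x (List.mem_of_mem_drop hx), hu'.2.2.drop _⟩
      intro h0
      have := congrArg List.length h0
      simp at this
      omega
    have hpr : ((a (k + 1))⁻¹ :: v.drop (k + 1)).prod = (u.drop (k + 1)).prod := by
      have e1 := List.prod_take_mul_prod_drop v (k + 1)
      have e2 := List.prod_take_mul_prod_drop u (k + 1)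
      rw [← h, ← e1, tele _ hi.le, mul_assoc, mul_left_cancel_iff] at e2
      rw [List.prod_cons, ← e2]
      group
    have := (hP.uniq _ _ hr1 hr2 hpr).1
    simp at this
    omega

/-- paths defined by reduced products representing a generator have
uniformly bounded diameter. -/
theorem generator_paths_bounded_diameter {G : Type*} [Group G] {X : Type*} [MetricSpace X]
    (S : Set G) (hSfin : S.Finite) (ι : G → X) (hX : IsCayleyGraph S ι)
    (P : Set G) (hP : IsPregroupStructure P)
    (hP6 : AxiomP6 P) (hH0 : AxiomH0 P) :
    ∃ D₁ > (0 : ℝ), ∀ s ∈ S, ∀ u : List G, IsReducedProd P u → u.prod = s →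
      ∀ pa : Set X, IsPathOf ι 1 u pa → Metric.diam pa ≤ D₁ := by
  have hrep : ∀ s : G, ∃ v : List G, IsReducedProd P v ∧ v.prod = s := hP.exists_rep
  choose v hv hvs using hrep
  have hFfin : (⋃ s ∈ S, ⋃ j ∈ Set.Iic (v s).length,
      (fun b => ((v s).take j).prod * b) '' BP P).Finite :=
    hSfin.biUnion fun s _ => (Set.finite_Iic _).biUnion fun j _ => hH0.image _
  set F := ⋃ s ∈ S, ⋃ j ∈ Set.Iic (v s).length,
      (fun b => ((v s).take j).prod * b) '' BP P with hF
  obtain ⟨M, hM⟩ := (hFfin.image (fun g => dist (ι g) (ι 1))).bddAbove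
  have hM' : ∀ g ∈ F, dist (ι g) (ι 1) ≤ M := fun g hg => hM ⟨g, hg, rfl⟩
  refine ⟨6 * |M| + 1, by positivity, ?_⟩
  intro s hs u hu hus pa hpa
  have hmem : ∀ i, dist (ι (1 * (u.take i).prod)) (ι 1) ≤ |M| := by
    intro i
    obtain ⟨j, hj, b, hb, e⟩ := prefix_mem P hP hP6 u (v s) hu (hv s) ((hvs s).trans hus.symm) i
    refine (hM' _ ?_).trans (le_abs_self M)
    rw [one_mul, hF]
    simp only [Set.mem_iUnion]
    exact ⟨s, hs, j, hj, b, hb, e.symm⟩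
  obtain ⟨segs, hsegs, rfl⟩ := hpa
  have hpt : ∀ x ∈ ⋃ i, segs i, dist x (ι 1) ≤ 3 * |M| := by
    intro x hx
    obtain ⟨i, hx⟩ := Set.mem_iUnion.1 hx
    obtain ⟨f, ⟨hf0, hf1, hf⟩, e⟩ := hsegs i
    rw [e] at hx
    obtain ⟨t, ht, rfl⟩ := hx
    have h1 := hf t ht 0 ⟨le_rfl, dist_nonneg⟩
    rw [hf0, sub_zero, abs_of_nonneg ht.1] at h1
    have h2 := hmem i.1
    have h3 := hmem (i.1 + 1)
    have h4 := dist_triangle_right (ι (1 * (u.take i.1).prod)) (ι (1 * (u.take (i.1 + 1)).prod)) (ι 1)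
    have h5 := dist_triangle (f t) (ι (1 * (u.take i.1).prod)) (ι 1)
    have h6 := ht.2
    linarith
  refine Metric.diam_le_of_forall_dist_le (by positivity) ?_
  intro x hx y hy
  have h1 := hpt x hx
  have h2 := hpt y hy
  have h3 := dist_triangle_right x y (ι 1)
  linarith
end

section
/- Suppose P satisfies axioms (P6), (H0) and (H1), with constants C_0 and C_1. Then there exists D_2 > 0 (one may take D_2 = C_0 + 2C_1) such that whenever reduced P-products u = (u_1,…,u_n) and v = (v_1,…,v_n) represent the same element g ∈ G, the Hausdorff distance between any path in Γ(G,S) defined by u based at 1 and any path defined by v based at 1 is at most D_2. -/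
open Metric Set

namespace RPH

section geo
variable {X : Type*} [MetricSpace X]

lemma seg_dist {s : Set X} {x y : X} (h : IsGeodesicSegment s x y) {p q : X}
    (hp : p ∈ s) (hq : q ∈ s) : dist p q = |dist x p - dist x q| := by
  obtain ⟨f, ⟨h0, h1, hd⟩, rfl⟩ := h
  obtain ⟨t, ht, rfl⟩ := hp
  obtain ⟨r, hr, rfl⟩ := hq
  have z : (0:ℝ) ∈ Icc (0:ℝ) (dist x y) := ⟨le_rfl, dist_nonneg⟩
  have e1 := hd 0 z t ht
  have e2 := hd 0 z r hr
  rw [h0] at e1 e2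
  rw [hd t ht r hr, e1, e2]
  congr 1
  simp [abs_of_nonneg ht.1, abs_of_nonneg hr.1]

lemma seg_left {s : Set X} {x y : X} (h : IsGeodesicSegment s x y) : x ∈ s := by
  obtain ⟨f, ⟨h0, h1, hd⟩, rfl⟩ := h
  exact ⟨0, ⟨le_rfl, dist_nonneg⟩, h0⟩

lemma seg_right {s : Set X} {x y : X} (h : IsGeodesicSegment s x y) : y ∈ s := by
  obtain ⟨f, ⟨h0, h1, hd⟩, rfl⟩ := h
  exact ⟨dist x y, ⟨dist_nonneg, le_rfl⟩, h1⟩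

lemma seg_point {s : Set X} {x y : X} (h : IsGeodesicSegment s x y) {k : ℝ}
    (h0 : 0 ≤ k) (hk : k ≤ dist x y) :
    ∃ p ∈ s, dist x p = k ∧ dist p y = dist x y - k := by
  obtain ⟨f, ⟨hf0, h1, hd⟩, rfl⟩ := h
  refine ⟨f k, ⟨k, ⟨h0, hk⟩, rfl⟩, ?_, ?_⟩
  · have := hd 0 ⟨le_rfl, dist_nonneg⟩ k ⟨h0, hk⟩
    rw [hf0] at this
    rw [this]; simp [abs_of_nonneg h0]
  · have := hd k ⟨h0, hk⟩ (dist x y) ⟨dist_nonneg, le_rfl⟩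
    rw [h1] at this
    rw [this, abs_sub_comm, abs_of_nonneg (by linarith)]

lemma seg_between {s : Set X} {x y : X} (h : IsGeodesicSegment s x y) {p : X} (hp : p ∈ s) :
    dist x p ≤ dist x y := by
  obtain ⟨f, ⟨hf0, h1, hd⟩, rfl⟩ := h
  obtain ⟨t, ht, rfl⟩ := hp
  have := hd 0 ⟨le_rfl, dist_nonneg⟩ t ht
  rw [hf0] at this
  rw [this]; simpa [abs_of_nonneg ht.1] using ht.2

lemma concat (hX : IsGeodesicSpace X) {x m y : X} (h : dist x m + dist m y = dist x y) :
    ∃ s, IsGeodesicSegment s x y ∧ m ∈ s := by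
  obtain ⟨_, f, ⟨f0, f1, fd⟩, -⟩ := hX x m
  obtain ⟨_, g, ⟨g0, g1, gd⟩, -⟩ := hX m y
  set A := dist x m with hA
  set B := dist m y with hB
  have hA0 : 0 ≤ A := dist_nonneg
  have hB0 : 0 ≤ B := dist_nonneg
  let F : ℝ → X := fun t => if t ≤ A then f t else g (t - A)
  have F0 : F 0 = x := by simp [F, hA0, f0]
  have FA : F A = m := by simp [F, f1]
  have F1 : F (dist x y) = y := by
    rw [← h]
    by_cases hb : A + B ≤ A
    · have : B = 0 := by linarith
      have e : m = y := by rw [← dist_eq_zero]; exact this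
      simp only [F, if_pos hb]
      rw [this, add_zero, f1, e]
    · simp only [F, if_neg hb]
      rw [add_sub_cancel_left, g1]
  have key : ∀ a b : ℝ, 0 ≤ a → a ≤ b → b ≤ A + B → dist (F a) (F b) = b - a := by
    have upper : ∀ a b : ℝ, 0 ≤ a → a ≤ b → b ≤ A + B → dist (F a) (F b) ≤ b - a := by
      intro a b ha hab hb
      by_cases h1 : b ≤ A
      · have h2 : a ≤ A := hab.trans h1
        simp only [F, if_pos h1, if_pos h2]
        rw [fd a ⟨ha, h2⟩ b ⟨ha.trans hab, h1⟩, abs_sub_comm, abs_of_nonneg (by linarith)]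
      · push Not at h1
        by_cases h2 : a ≤ A
        · simp only [F, if_neg (not_le.2 h1), if_pos h2]
          have e1 := fd a ⟨ha, h2⟩ A ⟨hA0, le_rfl⟩
          have e2 := gd 0 ⟨le_rfl, hB0⟩ (b - A) ⟨by linarith, by linarith⟩
          rw [f1, abs_sub_comm, abs_of_nonneg (by linarith)] at e1
          rw [g0, abs_sub_comm, abs_of_nonneg (by linarith)] at e2
          have := dist_triangle (f a) m (g (b - A))
          linarith
        · push Not at h2
          simp only [F, if_neg (not_le.2 h1), if_neg (not_le.2 h2)]
          rw [gd (a - A) ⟨by linarith, by linarith⟩ (b - A) ⟨by linarith, by linarith⟩,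
            abs_sub_comm, abs_of_nonneg (by linarith)]
          linarith
    intro a b ha hab hb
    refine le_antisymm (upper a b ha hab hb) ?_
    have u1 := upper 0 a le_rfl ha (hab.trans hb)
    have u2 := upper b (A + B) (ha.trans hab) hb le_rfl
    rw [F0] at u1
    rw [h, F1] at u2
    have t1 := dist_triangle x (F a) (F b)
    have t2 := dist_triangle x (F b) y
    linarith
  refine ⟨F '' Icc 0 (dist x y), ⟨F, ⟨F0, F1, ?_⟩, rfl⟩, A, ⟨hA0, by linarith⟩, FA⟩
  intro a ha b hb
  rcases le_total a b with hab | hab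
  · rw [key a b ha.1 hab (h ▸ hb.2), abs_sub_comm, abs_of_nonneg (by linarith)]
  · rw [dist_comm, key b a hb.1 hab (h ▸ ha.2), abs_of_nonneg (by linarith)]

lemma cthick {C : ℝ} (hC : 0 < C) {s : Set X} {x : X} (h : x ∈ cthickening C s) :
    ∃ y ∈ s, dist x y < C + 1 :=
  mem_thickening_iff.1 (cthickening_subset_thickening' (by linarith) (by linarith) s h)

end geo

section cay
variable {G : Type*} [Group G] {X : Type*} [MetricSpace X] {S : Set G} {ι : G → X}

lemma tr (hX : IsCayleyGraph S ι) (a g h : G) : dist (ι (a * g)) (ι (a * h)) = dist (ι g) (ι h) := by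
  rw [hX.dist_eq, hX.dist_eq]; congr 2; group

lemma near_vertex (hX : IsCayleyGraph S ι) {s : Set X} {a b : G}
    (hs : IsGeodesicSegment s (ι a) (ι b)) (k : ℕ) (hk : (k : ℝ) ≤ dist (ι a) (ι b)) :
    ∃ y ∈ s, ∃ c : G, dist (ι a) y = k ∧ dist y (ι c) ≤ 1 / 2 ∧ dist (ι a) (ι c) = k ∧
      dist (ι a) (ι c) + dist (ι c) (ι b) = dist (ι a) (ι b) := by
  obtain ⟨y, hy, h1, h2⟩ := seg_point hs (Nat.cast_nonneg k) hk
  obtain ⟨c, hc⟩ := hX.dense y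
  have t1 := dist_triangle (ι a) y (ι c)
  have t2 := dist_triangle (ι a) (ι c) y
  have t3 := dist_triangle (ι c) y (ι b)
  have t4 := dist_triangle y (ι c) (ι b)
  rw [dist_comm (ι c) y] at t2 t3
  have e1 := hX.dist_eq a c
  have e2 := hX.dist_eq c b
  have e3 := hX.dist_eq a b
  have E1 : wordLength S (a⁻¹ * c) = k := by
    rw [e1, h1] at t1 t2
    have : (wordLength S (a⁻¹ * c) : ℝ) < k + 1 := by linarith
    have : (k : ℝ) < wordLength S (a⁻¹ * c) + 1 := by linarith
    norm_cast at *
    omega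
  have E2 : k + wordLength S (c⁻¹ * b) = wordLength S (a⁻¹ * b) := by
    rw [h2, e2, e3] at t3 t4
    have : (k + wordLength S (c⁻¹ * b) : ℝ) < wordLength S (a⁻¹ * b) + 1 := by linarith
    have : (wordLength S (a⁻¹ * b) : ℝ) < k + wordLength S (c⁻¹ * b) + 1 := by linarith
    norm_cast at *
    omega
  refine ⟨y, hy, c, h1, hc, by rw [e1, E1], ?_⟩
  rw [e1, e2, e3, E1]; exact_mod_cast E2

/-- `z` lies between `a` and `b`. -/
def Btw (ι : G → X) (a z b : G) : Prop :=
  dist (ι a) (ι z) + dist (ι z) (ι b) = dist (ι a) (ι b)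

lemma Btw.tr (hX : IsCayleyGraph S ι) {a z b : G} (h : Btw ι a z b) (c : G) :
    Btw ι (c * a) (c * z) (c * b) := by
  unfold Btw at *
  rwa [RPH.tr hX, RPH.tr hX, RPH.tr hX]

lemma Btw.symm {a z b : G} (h : Btw ι a z b) : Btw ι b z a := by
  unfold Btw at *
  rw [dist_comm (ι b), dist_comm (ι z) (ι a), dist_comm (ι b)]; linarith

lemma near_btw (hX : IsCayleyGraph S ι) {s : Set X} {a b : G}
    (hs : IsGeodesicSegment s (ι a) (ι b)) {x : X} (hx : x ∈ s) :
    ∃ z, Btw ι a z b ∧ dist x (ι z) ≤ 3 / 2 := by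
  have hle := seg_between hs hx
  have hf := Nat.floor_le (dist_nonneg (x := ι a) (y := x))
  have hf2 := Nat.lt_floor_add_one (dist (ι a) x)
  obtain ⟨y, hy, c, h1, h2, -, h4⟩ := near_vertex hX hs ⌊dist (ι a) x⌋₊ (hf.trans hle)
  refine ⟨c, h4, ?_⟩
  have e := seg_dist hs hx hy
  rw [h1, abs_of_nonneg (by linarith)] at e
  have := dist_triangle x y (ι c)
  linarith

variable {P : Set G} {C₁ : ℝ}

lemma triangle (hX : IsCayleyGraph S ι) (hC₁ : 0 < C₁) (hH1 : AxiomH1 P ι C₁)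
    {a b c z : G} (hp : a⁻¹ * b ∈ P) (hq : b⁻¹ * c ∈ P) (hz : Btw ι a z b) :
    ∃ w, (Btw ι b w c ∨ Btw ι a w c) ∧ dist (ι z) (ι w) ≤ C₁ + 5 / 2 := by
  have hz' := hz.tr hX a⁻¹
  rw [inv_mul_cancel] at hz'
  obtain ⟨s, hs, hzs⟩ := concat hX.geodesic hz'
  obtain ⟨t, ht⟩ := hX.geodesic (ι (a⁻¹ * b)) (ι (a⁻¹ * b * (b⁻¹ * c)))
  obtain ⟨r, hr⟩ := hX.geodesic (ι 1) (ι (a⁻¹ * b * (b⁻¹ * c)))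
  obtain ⟨y, hy, hd⟩ := cthick hC₁ ((hH1 _ hp _ hq s t r hs ht hr).1 hzs)
  have fin : ∀ w, dist y (ι w) ≤ 3 / 2 → dist (ι z) (ι (a * w)) ≤ C₁ + 5 / 2 := by
    intro w hw
    have e := tr hX a (a⁻¹ * z) w
    rw [mul_inv_cancel_left] at e
    rw [e]
    have := dist_triangle (ι (a⁻¹ * z)) y (ι w)
    linarith
  rcases hy with hy | hy
  · obtain ⟨w, hw, hw2⟩ := near_btw hX ht hy
    refine ⟨a * w, Or.inl ?_, fin w hw2⟩
    have := hw.tr hX a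
    simpa [mul_assoc] using this
  · obtain ⟨w, hw, hw2⟩ := near_btw hX hr hy
    refine ⟨a * w, Or.inr ?_, fin w hw2⟩
    have := hw.tr hX a
    simpa [mul_assoc] using this

lemma bigon (hX : IsCayleyGraph S ι) (hP : IsPregroupStructure P)
    (hC₁ : 0 < C₁) (hH1 : AxiomH1 P ι C₁)
    {a b z : G} (hp : a⁻¹ * b ∈ P) (hz : Btw ι a z b) {s : Set X}
    (hs : IsGeodesicSegment s (ι a) (ι b)) :
    ∃ y ∈ s, dist (ι z) y ≤ 2 * C₁ + 5 / 2 := by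
  have hk : dist (ι a) (ι z) ≤ dist (ι a) (ι b) := by
    have : dist (ι a) (ι z) + dist (ι z) (ι b) = dist (ι a) (ι b) := hz
    have := dist_nonneg (x := ι z) (y := ι b)
    linarith
  have ek := hX.dist_eq a z
  obtain ⟨y, hy, c, -, h2, h3, h4⟩ := near_vertex hX hs (wordLength S (a⁻¹ * z)) (ek ▸ hk)
  refine ⟨y, hy, ?_⟩
  have hc : Btw ι a c b := h4
  have hz' := hz.tr hX a⁻¹
  have hc' := hc.tr hX a⁻¹
  have d1 : dist (ι 1) (ι (a⁻¹ * z)) = dist (ι a) (ι z) := by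
    rw [← tr hX a]; simp
  have d2 : dist (ι 1) (ι (a⁻¹ * c)) = dist (ι a) (ι c) := by
    rw [← tr hX a]; simp
  rw [inv_mul_cancel] at hz' hc'
  obtain ⟨s', hs', hzs⟩ := concat hX.geodesic hz'
  obtain ⟨r, hr, hcr⟩ := concat hX.geodesic hc'
  obtain ⟨t, ht⟩ := hX.geodesic (ι (a⁻¹ * b)) (ι (a⁻¹ * b * 1))
  obtain ⟨q, hq, hd⟩ := cthick hC₁
    ((hH1 _ hp _ hP.one_mem s' t r hs' ht (by rwa [mul_one])).1 hzs)
  have hqr : q ∈ r := by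
    rcases hq with hq | hq
    · have := seg_between ht hq
      rw [mul_one, dist_self] at this
      have : ι (a⁻¹ * b) = q := dist_le_zero.1 this
      rw [← this]; exact seg_right hr
    · exact hq
  have e := seg_dist hr hqr hcr
  have e2 : dist q (ι (a⁻¹ * c)) ≤ C₁ + 1 := by
    rw [e, d2, h3, ← ek, ← d1, abs_le]
    have t1 := dist_triangle (ι 1) q (ι (a⁻¹ * z))
    have t2 := dist_triangle (ι 1) (ι (a⁻¹ * z)) q
    rw [dist_comm q] at t1
    constructor <;> linarith
  have e3 := tr hX a⁻¹ z c
  have t1 := dist_triangle (ι (a⁻¹ * z)) q (ι (a⁻¹ * c))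
  have t2 := dist_triangle (ι z) (ι c) y
  rw [dist_comm (ι c)] at t2
  linarith

lemma quad (hX : IsCayleyGraph S ι) (hP : IsPregroupStructure P)
    (hC₁ : 0 < C₁) (hH1 : AxiomH1 P ι C₁) {C₀ : ℝ} (hC₀ : 0 ≤ C₀)
    {a b c d z : G} (hab : a⁻¹ * b ∈ P) (hbc : b⁻¹ * c ∈ P) (hac : a⁻¹ * c ∈ P)
    (hdc : d⁻¹ * c ∈ P) (h1 : dist (ι b) (ι c) ≤ C₀) (h2 : dist (ι a) (ι d) ≤ C₀)
    (hz : Btw ι a z b) {s : Set X} (hs : IsGeodesicSegment s (ι d) (ι c)) :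
    ∃ y ∈ s, dist (ι z) y ≤ C₀ + 4 * C₁ + 15 / 2 := by
  obtain ⟨w, hw, hzw⟩ := triangle hX hC₁ hH1 hab hbc hz
  rcases hw with hw | hw
  · refine ⟨ι c, seg_right hs, ?_⟩
    unfold Btw at hw
    have := dist_nonneg (x := ι b) (y := ι w)
    have := dist_triangle (ι z) (ι w) (ι c)
    linarith
  · have hcd : c⁻¹ * d ∈ P := by
      have := hP.inv_mem _ hdc
      simpa using this
    obtain ⟨w', hw', hzw'⟩ := triangle hX hC₁ hH1 hac hcd hw
    have t1 := dist_triangle (ι z) (ι w) (ι w')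
    rcases hw' with hw' | hw'
    · obtain ⟨y, hy, hd⟩ := bigon hX hP hC₁ hH1 hdc hw'.symm hs
      refine ⟨y, hy, ?_⟩
      have := dist_triangle (ι z) (ι w') y
      linarith
    · refine ⟨ι d, seg_left hs, ?_⟩
      unfold Btw at hw'
      have := dist_nonneg (x := ι a) (y := ι w')
      have := dist_triangle (ι z) (ι w') (ι d)
      linarith

end cay

section pre
variable {G : Type*} [Group G] {P : Set G}

lemma BP_inv (hP : IsPregroupStructure P) {b : G} (hb : b ∈ BP P) : b⁻¹ ∈ BP P := by
  refine ⟨hP.inv_mem _ hb.1, fun z hz => ⟨?_, ?_⟩⟩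
  · have := hP.inv_mem _ (hb.2 _ (hP.inv_mem _ hz)).2
    simpa using this
  · have := hP.inv_mem _ (hb.2 _ (hP.inv_mem _ hz)).1
    simpa using this

lemma one_BP (hP : IsPregroupStructure P) : (1 : G) ∈ BP P :=
  ⟨hP.one_mem, fun z hz => by simpa using hz⟩

lemma three (hP : IsPregroupStructure P) {x y z : G} (hx : x ∈ P) (hy : y ∈ P) (hz : z ∈ P)
    (h : x * y * z ∈ P) : x * y ∈ P ∨ y * z ∈ P := by
  by_contra hc
  push Not at hc
  have h1 : IsReducedProd P [x, y, z] := by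
    refine ⟨by simp, by simp [hx, hy, hz], ?_⟩
    intro i hi
    have : i = 0 ∨ i = 1 := by simp at hi; omega
    rcases this with rfl | rfl
    · exact hc.1
    · exact hc.2
  have h2 : IsReducedProd P [x * y * z] := by
    refine ⟨by simp, by simp [h], ?_⟩
    intro i hi
    simp at hi
  have := (hP.uniq _ _ h1 h2 (by simp [mul_assoc])).1
  simp at this

lemma a_BP (hP : IsPregroupStructure P) (hP6 : AxiomP6 P) {u v : List G}
    (hu : IsReducedProd P u) (hv : IsReducedProd P v) (h : u.prod = v.prod) :
    ∃ a : ℕ → G, (∀ i ≤ u.length, a i ∈ BP P) ∧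
      ∀ i ≤ u.length, (v.take i).prod = (u.take i).prod * a i := by
  obtain ⟨hl, a, a0, an, haP, hav⟩ := hP.uniq u v hu hv h
  have haP' : ∀ i ≤ u.length, a i ∈ P := by
    intro i hi
    rcases Nat.eq_zero_or_pos i with rfl | h0
    · rw [a0]; exact hP.one_mem
    · rcases hi.eq_or_lt with rfl | h1
      · rw [an]; exact hP.one_mem
      · exact haP i h0 h1
  have huP : ∀ i, ∀ hi : i < u.length, u[i] ∈ P := fun i hi => hu.2.1 _ (List.getElem_mem hi)
  have Q : ∀ j, ∀ i, ∀ hi : i < u.length, i + 1 + j = u.length → (a i)⁻¹ * u[i] ∈ P := by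
    intro j
    induction j with
    | zero =>
      intro i hi e
      have := (hav i hi (hl ▸ hi)).1
      rw [show i + 1 = u.length by omega, an, mul_one] at this
      exact this
    | succ j ih =>
      intro i hi e
      have hi1 : i + 1 < u.length := by omega
      have hv1 := (hav i hi (hl ▸ hi)).1
      rcases three hP (hP.inv_mem _ (haP' i hi.le)) (huP i hi) (haP' (i+1) hi) hv1 with h | h
      · exact h
      · have hB := hP6 _ (huP i hi) _ (huP (i+1) hi1) (hu.2.2 i hi1) _ (haP' (i+1) hi) h
          (ih (i+1) hi1 (by omega))
        have := ((BP_inv hP hB).2 _ hv1).1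
        simpa [mul_assoc] using this
  refine ⟨a, ?_, ?_⟩
  · intro i
    induction i with
    | zero => intro _; rw [a0]; exact one_BP hP
    | succ i ih =>
      intro hi
      rcases hi.eq_or_lt with e | h1
      · rw [e, an]; exact one_BP hP
      · have hB := ih (by omega)
        have hi' : i < u.length := by omega
        have hv1 := (hav i hi' (hl ▸ hi')).1
        have := (hB.2 _ hv1).2
        exact hP6 _ (huP i hi') _ (huP (i+1) h1) (hu.2.2 i h1) _ (haP' (i+1) hi)
          (by simpa [mul_assoc] using this) (Q (u.length - (i+2)) (i+1) h1 (by omega))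
  · intro i
    induction i with
    | zero => intro _; simp [a0]
    | succ i ih =>
      intro hi
      have hi' : i < u.length := by omega
      rw [List.prod_take_succ _ _ hi', List.prod_take_succ _ _ (hl ▸ hi'), ih hi'.le,
        (hav i hi' (hl ▸ hi')).2]
      simp [mul_assoc]

end pre

lemma oneside {G : Type*} [Group G] {X : Type*} [MetricSpace X]
    {S : Set G} {ι : G → X} (hX : IsCayleyGraph S ι)
    {P : Set G} (hP : IsPregroupStructure P) (hP6 : AxiomP6 P)
    {C₁ : ℝ} (hC₁ : 0 < C₁) (hH1 : AxiomH1 P ι C₁) {C₀ : ℝ} (hC₀ : 0 ≤ C₀)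
    (hB : ∀ b ∈ BP P, dist (ι 1) (ι b) ≤ C₀) {u v : List G}
    (hu : IsReducedProd P u) (hv : IsReducedProd P v) (hl : u.length = v.length)
    (h : u.prod = v.prod) {pa qa : Set X} (hpa : IsPathOf ι 1 u pa) (hqa : IsPathOf ι 1 v qa)
    {x : X} (hx : x ∈ pa) : ∃ y ∈ qa, dist x y ≤ C₀ + 4 * C₁ + 9 := by
  obtain ⟨a, haB, hav⟩ := a_BP hP hP6 hu hv h
  obtain ⟨sg, hsg, rfl⟩ := hpa
  obtain ⟨sg', hsg', rfl⟩ := hqa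
  obtain ⟨⟨i, hi⟩, hx⟩ := mem_iUnion.1 hx
  have hs := hsg ⟨i, hi⟩
  have hs' := hsg' ⟨i, hl ▸ hi⟩
  simp only [one_mul] at hs hs'
  obtain ⟨z, hz, hxz⟩ := near_btw hX hs hx
  have huP : u[i] ∈ P := hu.2.1 _ (List.getElem_mem hi)
  have hvP : v[i]'(hl ▸ hi) ∈ P := hv.2.1 _ (List.getElem_mem _)
  have hd : ∀ j ≤ u.length, dist (ι (u.take j).prod) (ι (v.take j).prod) ≤ C₀ := by
    intro j hj
    rw [hav j hj]
    have e := tr hX (u.take j).prod 1 (a j)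
    rw [mul_one] at e
    rw [e]; exact hB _ (haB j hj)
  obtain ⟨y, hy, hzy⟩ := quad hX hP hC₁ hH1 hC₀
    (by rw [List.prod_take_succ _ _ hi]; simpa using huP)
    (by rw [hav (i+1) hi]; simpa using (haB (i+1) hi).1)
    (by
      rw [hav (i+1) hi, List.prod_take_succ _ _ hi]
      simpa [mul_assoc] using ((haB (i+1) hi).2 _ huP).1)
    (by rw [List.prod_take_succ _ _ (hl ▸ hi)]; simpa using hvP)
    (hd (i+1) hi) (hd i hi.le) hz hs'
  refine ⟨y, mem_iUnion.2 ⟨_, hy⟩, ?_⟩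
  have := dist_triangle x (ι z) y
  linarith

end RPH

/-- paths defined by two reduced products representing the same
element are uniformly Hausdorff-close. -/
theorem reduced_paths_hausdorff_close {G : Type*} [Group G] {X : Type*} [MetricSpace X]
    (S : Set G) (hSfin : S.Finite) (ι : G → X) (hX : IsCayleyGraph S ι)
    (P : Set G) (hP : IsPregroupStructure P)
    (hP6 : AxiomP6 P) (hH0 : AxiomH0 P)
    (C₁ : ℝ) (hC₁ : 0 < C₁) (hH1 : AxiomH1 P ι C₁) :
    ∃ D₂ > (0 : ℝ), ∀ g : G, ∀ u v : List G,
      IsReducedProd P u → IsReducedProd P v → u.length = v.length →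
      u.prod = g → v.prod = g →
      ∀ pa qa : Set X, IsPathOf ι 1 u pa → IsPathOf ι 1 v qa →
        hausdorffDist pa qa ≤ D₂ := by
  obtain ⟨M, hM⟩ := (hH0.image (fun b => dist (ι 1) (ι b))).bddAbove
  have hB : ∀ b ∈ BP P, dist (ι 1) (ι b) ≤ max M 0 := fun b hb =>
    (hM (mem_image_of_mem _ hb)).trans (le_max_left _ _)
  have hM0 : 0 ≤ max M 0 := le_max_right _ _
  refine ⟨max M 0 + 4 * C₁ + 9, by linarith, ?_⟩
  intro g u v hu hv hl hug hvg pa qa hpa hqa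
  refine hausdorffDist_le_of_mem_dist (by linarith) ?_ ?_
  · intro x hx
    exact RPH.oneside hX hP hP6 hC₁ hH1 hM0 hB hu hv hl (hug.trans hvg.symm) hpa hqa hx
  · intro x hx
    exact RPH.oneside hX hP hP6 hC₁ hH1 hM0 hB hv hu hl.symm (hvg.trans hug.symm) hqa hpa hx
end

section
/- Suppose P satisfies axioms (P6), (H0) and (H1), with constants C_0 and C_1. Then there exists D_3 > 0 (one may take D_3 = C_0 + 3C_1) such that for all f, g ∈ G represented by reduced P-products u = (u_1,…,u_k) and v = (v_1,…,v_m) respectively, and every reduced P-product w = (w_1,…,w_n) representing fg, the triangle in Γ(G,S) formed by a path defined by u based at 1 (from 1 to f), a path defined by v based at f (from f to fg), and a path defined by w based at 1 (from 1 to fg) is D_3-thin: each of the three paths lies in the closed D_3-neighborhood of the union of the other two. -/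
open Metric Set

section Combi

variable {G : Type*} [Group G]

/-- Reduced, possibly empty. -/
def Red (P : Set G) (u : List G) : Prop :=
  (∀ x ∈ u, x ∈ P) ∧ u.IsChain (fun a b => a * b ∉ P)

lemma red_of {P : Set G} {u : List G} (h : IsReducedProd P u) : Red P u := by
  refine ⟨h.2.1, ?_⟩
  rw [List.isChain_iff_getElem]
  exact fun i hi => h.2.2 i hi

lemma of_red {P : Set G} {u : List G} (h : Red P u) (h0 : u ≠ []) : IsReducedProd P u := by
  refine ⟨h0, h.1, ?_⟩
  have := h.2
  rw [List.isChain_iff_getElem] at this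
  exact fun i hi => this i hi

lemma bp_mul {P : Set G} {b c : G} (hb : b ∈ BP P) (hc : c ∈ BP P) : b * c ∈ BP P := by
  refine ⟨(hb.2 c hc.1).2, fun z hz => ⟨?_, ?_⟩⟩
  · rw [← mul_assoc]; exact (hc.2 _ (hb.2 z hz).1).1
  · rw [mul_assoc]; exact (hb.2 _ (hc.2 z hz).2).2

lemma bp_inv {P : Set G} (hP : IsPregroupStructure P) {b : G} (hb : b ∈ BP P) : b⁻¹ ∈ BP P := by
  refine ⟨hP.inv_mem _ hb.1, fun z hz => ⟨?_, ?_⟩⟩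
  · have := hP.inv_mem _ (hb.2 _ (hP.inv_mem _ hz)).2
    simpa using this
  · have := hP.inv_mem _ (hb.2 _ (hP.inv_mem _ hz)).1
    simpa using this

lemma bp_one {P : Set G} (hP : IsPregroupStructure P) : (1 : G) ∈ BP P :=
  ⟨hP.one_mem, fun z hz => by simpa using hz⟩

/-- equal modulo `B_P` on the right. -/
def BRel (P : Set G) (x y : G) : Prop := x⁻¹ * y ∈ BP P

lemma brel_refl {P : Set G} (hP : IsPregroupStructure P) (x : G) : BRel P x x := by
  unfold BRel; simpa using bp_one hP

lemma brel_symm {P : Set G} (hP : IsPregroupStructure P) {x y : G} (h : BRel P x y) :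
    BRel P y x := by
  have := bp_inv hP h
  unfold BRel; simpa using this

lemma brel_trans {P : Set G} {x y z : G} (h : BRel P x y) (h' : BRel P y z) :
    BRel P x z := by
  have := bp_mul h h'
  unfold BRel; simpa [mul_assoc] using this

/-- `(a,b)` is an edge of the path of `u` based at `x`. -/
def Edge (x : G) (u : List G) (a b : G) : Prop :=
  ∃ l₁ c l₂, u = l₁ ++ c :: l₂ ∧ a = x * l₁.prod ∧ b = x * l₁.prod * c

lemma edge_left {x : G} {u : List G} (v : List G) {a b : G} (h : Edge x u a b) :
    Edge x (u ++ v) a b := by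
  obtain ⟨l₁, c, l₂, rfl, ha, hb⟩ := h
  exact ⟨l₁, c, l₂ ++ v, by simp, ha, hb⟩

lemma edge_cons {x q : G} {u : List G} {a b : G} (h : Edge (x * q) u a b) :
    Edge x (q :: u) a b := by
  obtain ⟨l₁, c, l₂, rfl, ha, hb⟩ := h
  exact ⟨q :: l₁, c, l₂, by simp, by simp [ha, mul_assoc], by simp [hb, mul_assoc]⟩

lemma edge_snoc {x p : G} {u : List G} {a b : G} (h : Edge x (u ++ [p]) a b) :
    Edge x u a b ∨ (a = x * u.prod ∧ b = x * u.prod * p) := by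
  obtain ⟨l₁, c, l₂, hu, ha, hb⟩ := h
  rcases List.eq_nil_or_concat l₂ with rfl | ⟨l, e, rfl⟩
  · right
    obtain ⟨h1, h2⟩ := List.append_inj' hu rfl
    simp at h2
    subst h1 h2
    exact ⟨ha, hb⟩
  · left
    have : u ++ [p] = (l₁ ++ c :: l) ++ [e] := by simpa using hu
    obtain ⟨h1, h2⟩ := List.append_inj' this rfl
    exact ⟨l₁, c, l, h1, ha, hb⟩

/-- inverse word -/
def invl (u : List G) : List G := (u.map (·⁻¹)).reverse

lemma invl_prod (u : List G) : (invl u).prod = u.prod⁻¹ := by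
  rw [invl, List.prod_inv_reverse]

lemma invl_invl (u : List G) : invl (invl u) = u := by
  simp [invl, List.map_reverse]

lemma red_invl {P : Set G} (hP : IsPregroupStructure P) {u : List G} (h : Red P u) :
    Red P (invl u) := by
  constructor
  · intro x hx
    simp only [invl, List.mem_reverse, List.mem_map] at hx
    obtain ⟨y, hy, rfl⟩ := hx
    exact hP.inv_mem _ (h.1 y hy)
  · rw [invl, List.isChain_reverse, List.isChain_map]
    refine h.2.imp ?_
    intro a b hab hc
    apply hab
    simpa using hP.inv_mem _ hc

lemma edge_invl {x : G} {u : List G} {a b : G} (h : Edge x u a b) :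
    Edge (x * u.prod) (invl u) b a := by
  obtain ⟨l₁, c, l₂, rfl, ha, hb⟩ := h
  refine ⟨invl l₂, c⁻¹, invl l₁, by simp [invl], ?_, ?_⟩
  · rw [invl_prod, hb]; simp [mul_assoc]
  · rw [invl_prod, ha]; simp [mul_assoc]

/-- the trichotomy for edges -/
def Tri (P : Set G) (x : G) (u : List G) (y : G) (v w : List G) : Prop :=
  ∀ a b, Edge x u a b →
    (∃ a' b', Edge x w a' b' ∧ BRel P a a' ∧ BRel P b b') ∨
    (∃ a' b', Edge y v b' a' ∧ BRel P a a' ∧ BRel P b b') ∨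
    (∃ a' b' c c', Edge x w a' c ∧ Edge y v b' c' ∧ BRel P a a' ∧ BRel P b b' ∧ BRel P c c')

lemma red_append {P : Set G} {u v : List G} :
    Red P (u ++ v) ↔ Red P u ∧ Red P v ∧ ∀ a ∈ u.getLast?, ∀ b ∈ v.head?, a * b ∉ P := by
  unfold Red
  rw [List.isChain_append]
  simp only [List.mem_append]
  constructor
  · rintro ⟨h1, h2, h3, h4⟩
    exact ⟨⟨fun x hx => h1 x (Or.inl hx), h2⟩, ⟨fun x hx => h1 x (Or.inr hx), h3⟩, h4⟩
  · rintro ⟨⟨h1, h2⟩, ⟨h3, h4⟩, h5⟩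
    exact ⟨fun x hx => hx.elim (h1 x) (h3 x), h2, h4, h5⟩

lemma red_cons {P : Set G} {q : G} {v : List G} :
    Red P (q :: v) ↔ q ∈ P ∧ Red P v ∧ ∀ b ∈ v.head?, q * b ∉ P := by
  unfold Red
  rw [List.isChain_cons]
  simp only [List.mem_cons, forall_eq_or_imp]
  tauto

lemma red_nil {P : Set G} : Red P ([] : List G) := ⟨by simp, by simp⟩

lemma red_snoc {P : Set G} {q : G} {v : List G} :
    Red P (v ++ [q]) ↔ q ∈ P ∧ Red P v ∧ ∀ b ∈ v.getLast?, b * q ∉ P := by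
  rw [red_append, red_cons]
  simp only [red_nil, List.head?_cons, List.head?_nil]
  simp
  tauto

lemma red_mid {P : Set G} {q : G} {u v : List G} :
    Red P (u ++ q :: v) ↔ Red P (u ++ [q]) ∧ Red P (q :: v) := by
  rw [red_append, red_snoc, red_cons]
  simp
  tauto

lemma red_snoc_bp {P : Set G} (hP : IsPregroupStructure P) {p b : G} {u : List G}
    (hb : b ∈ BP P) (h : Red P (u ++ [p])) : Red P (u ++ [p * b]) := by
  rw [red_snoc] at h ⊢
  refine ⟨(hb.2 _ h.1).1, h.2.1, fun c hc hcc => h.2.2 c hc ?_⟩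
  have := ((bp_inv hP hb).2 _ hcc).1
  simpa [mul_assoc] using this

lemma red_cons_bp {P : Set G} (hP : IsPregroupStructure P) {p b : G} {u : List G}
    (hb : b ∈ BP P) (h : Red P (p :: u)) : Red P ((b * p) :: u) := by
  rw [red_cons] at h ⊢
  refine ⟨(hb.2 _ h.1).2, h.2.1, fun c hc hcc => h.2.2 c hc ?_⟩
  have := ((bp_inv hP hb).2 _ hcc).2
  simpa [mul_assoc] using this

lemma exists_tri {P : Set G} (hP : IsPregroupStructure P) (hP6 : AxiomP6 P) (u : List G) :
    ∀ (b : G) (v : List G), b ∈ BP P → Red P u → Red P v →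
      ∃ w, w ≠ [] ∧ Red P w ∧ w.prod = u.prod * b * v.prod ∧
        ∀ x, Tri P x u (x * u.prod * b) v w := by
  induction u using List.reverseRecOn with
  | nil =>
    intro b v hb _ hv
    have ht : ∀ w x y, Tri P x [] y v w := by
      intro w x y a c h
      obtain ⟨l₁, c, l₂, h, -, -⟩ := h
      simp at h
    cases v with
    | nil => exact ⟨[b], by simp, red_cons.2 ⟨hb.1, red_nil, by simp⟩, by simp, fun x => ht _ _ _⟩
    | cons q v =>
      exact ⟨(b * q) :: v, by simp, red_cons_bp hP hb hv, by simp [mul_assoc], fun x => ht _ _ _⟩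
  | append_singleton u p ih =>
    intro b v hb hu hv
    have hu' : Red P u := (red_append.1 hu).1
    have hp : p ∈ P := (red_snoc.1 hu).1
    have hpb : p * b ∈ P := (hb.2 p hp).1
    have hub := red_snoc_bp hP hb hu
    have key : ∀ v' : List G, ∀ x, Tri P x (u ++ [p]) (x * (u ++ [p]).prod * b) v
        (u ++ (p * b) :: v') := by
      intro v' x a c h
      left
      rcases edge_snoc h with h | ⟨rfl, rfl⟩
      · exact ⟨a, c, edge_left _ h, brel_refl hP _, brel_refl hP _⟩
      · refine ⟨_, _, ⟨u, p * b, v', rfl, rfl, rfl⟩, brel_refl hP _, ?_⟩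
        unfold BRel
        simpa [mul_assoc] using hb
    cases v with
    | nil => exact ⟨u ++ [p * b], by simp, hub, by simp [mul_assoc], key []⟩
    | cons q v =>
      have hq : q ∈ P := (red_cons.1 hv).1
      have hv' : Red P v := (red_cons.1 hv).2.1
      by_cases hy : p * b * q ∈ P
      · by_cases hyB : p * b * q ∈ BP P
        · obtain ⟨w, hw0, hw, hwp, hT⟩ := ih _ v hyB hu' hv'
          refine ⟨w, hw0, hw, by simp [hwp, mul_assoc], fun x a c h => ?_⟩
          have hbase : x * (u ++ [p]).prod * b * q = x * u.prod * (p * b * q) := by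
            simp [mul_assoc]
          rcases edge_snoc h with h | ⟨rfl, rfl⟩
          · rcases hT x a c h with h | ⟨a', b', h1, h2⟩ | ⟨a', b', c1, c', h1, h2, h3⟩
            · exact Or.inl h
            · refine Or.inr (Or.inl ⟨a', b', edge_cons ?_, h2⟩)
              rwa [hbase]
            · refine Or.inr (Or.inr ⟨a', b', c1, c', h1, edge_cons ?_, h3⟩)
              rwa [hbase]
          · refine Or.inr (Or.inl ⟨_, _, ⟨[], q, v, rfl, rfl, rfl⟩, ?_, ?_⟩)
            · unfold BRel
              simpa [mul_assoc] using hyB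
            · unfold BRel
              simpa [mul_assoc] using hb
        · refine ⟨u ++ (p * b * q) :: v, by simp, ?_, by simp [mul_assoc], fun x a c h => ?_⟩
          · rw [red_mid, red_snoc, red_cons]
            refine ⟨⟨hy, hu', fun c hc hcc => hyB ?_⟩, ⟨hy, hv', fun c hc hcc => hyB ?_⟩⟩
            · have h1 := (red_snoc.1 hub).2.2 c hc
              have hcP : c ∈ P := hu'.1 c (List.mem_of_mem_getLast? hc)
              refine hP6 c hcP _ hpb h1 _ hy hcc ?_
              have := hP.inv_mem _ hq
              simpa [mul_assoc] using this
            · have h1 := (red_cons.1 hv).2.2 c hc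
              have hcP : c ∈ P := hv'.1 c (List.mem_of_mem_head? hc)
              have := hP6 q hq c hcP h1 _ (hP.inv_mem _ hy) ?_ ?_
              · have := bp_inv hP this
                simpa [mul_assoc] using this
              · have := hP.inv_mem _ hpb
                simpa [mul_assoc] using this
              · simpa [mul_assoc] using hcc
          · rcases edge_snoc h with h | ⟨rfl, rfl⟩
            · exact Or.inl ⟨a, c, edge_left _ h, brel_refl hP _, brel_refl hP _⟩
            · refine Or.inr (Or.inr ⟨_, _, _, _, ⟨u, _, v, rfl, rfl, rfl⟩,
                ⟨[], q, v, rfl, rfl, rfl⟩, brel_refl hP _, ?_, ?_⟩)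
              · unfold BRel
                simpa [mul_assoc] using hb
              · unfold BRel
                simpa [mul_assoc] using bp_one hP
      · refine ⟨u ++ (p * b) :: q :: v, by simp, ?_, by simp [mul_assoc], key _⟩
        rw [red_mid, red_cons]
        exact ⟨hub, hpb, hv, by simpa using hy⟩

lemma red_take {P : Set G} {u : List G} (h : Red P u) (i : ℕ) : Red P (u.take i) := by
  rw [← List.take_append_drop i u] at h
  exact (red_append.1 h).1

lemma red_drop {P : Set G} {u : List G} (h : Red P u) (i : ℕ) : Red P (u.drop i) := by
  rw [← List.take_append_drop i u] at h
  exact (red_append.1 h).2.1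

lemma prefix_brel {P : Set G} (hP : IsPregroupStructure P) (hP6 : AxiomP6 P) {u w : List G}
    (hu : IsReducedProd P u) (hw : IsReducedProd P w) (h : u.prod = w.prod) :
    u.length = w.length ∧ ∀ i ≤ u.length, BRel P (u.take i).prod (w.take i).prod := by
  obtain ⟨hl, a, ha0, han, haP, ha⟩ := hP.uniq u w hu hw h
  refine ⟨hl, fun i hi => ?_⟩
  have hpre : ∀ i ≤ u.length, (w.take i).prod = (u.take i).prod * a i := by
    intro i
    induction i with
    | zero => intro _; simp [ha0]
    | succ i ih =>
      intro hi
      rw [List.prod_take_succ _ _ (by omega), List.prod_take_succ _ _ (by omega), ih (by omega),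
        (ha i (by omega) (by omega)).2]
      simp [mul_assoc]
  rcases Nat.eq_zero_or_pos i with rfl | hi0
  · simpa using brel_refl hP (1 : G)
  rcases hi.eq_or_lt with rfl | hin
  · rw [hl]
    conv => arg 2; rw [← hl]
    rw [List.take_length, List.take_length, h]
    exact brel_refl hP _
  have haB : a i ∈ BP P := by
    have hai := haP i hi0 hin
    have hru := red_of hu
    have hrw := red_of hw
    obtain ⟨j, rfl⟩ : ∃ j, i = j + 1 := ⟨i - 1, by omega⟩
    refine hP6 _ (hu.2.1 _ (List.getElem_mem (by omega : j < u.length))) _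
      (hu.2.1 _ (List.getElem_mem hin)) (hu.2.2 j hin) _ hai ?_ ?_
    · by_contra hc
      have hr : Red P (u.take (j + 1) ++ [a (j + 1)]) := by
        rw [red_snoc]
        refine ⟨hai, red_take hru _, ?_⟩
        have : (u.take (j+1)).getLast? = some (u[j]'(by omega)) := by
          rw [← List.take_concat_get' u j (by omega)]; exact List.getLast?_concat
        rw [this]
        simpa using hc
      have hne : w.take (j+1) ≠ [] := by
        rw [← List.length_pos_iff, List.length_take]; omega
      have := (hP.uniq _ _ (of_red hr (by simp)) (of_red (red_take hrw (j+1)) hne)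
        (by rw [hpre _ hi]; simp)).1
      simp only [List.length_append, List.length_take, List.length_singleton] at this
      omega
    · by_contra hc
      have hr : Red P ((a (j + 1))⁻¹ :: u.drop (j + 1)) := by
        rw [red_cons]
        refine ⟨hP.inv_mem _ hai, red_drop hru _, ?_⟩
        rw [List.drop_eq_getElem_cons hin, List.head?_cons]
        rintro b ⟨rfl⟩
        exact hc
      have hne : w.drop (j+1) ≠ [] := by
        rw [← List.length_pos_iff, List.length_drop]; omega
      have hp : ((a (j + 1))⁻¹ :: u.drop (j + 1)).prod = (w.drop (j+1)).prod := by
        have h1 := List.prod_take_mul_prod_drop u (j+1)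
        have h2 := List.prod_take_mul_prod_drop w (j+1)
        rw [← h, ← h1, hpre _ hi, mul_assoc, mul_right_inj] at h2
        simp [← h2]
      have := (hP.uniq _ _ (of_red hr (by simp)) (of_red (red_drop hrw (j+1)) hne) hp).1
      simp only [List.length_cons, List.length_drop] at this
      omega
  unfold BRel
  rw [hpre i hi]
  simpa using haB

lemma edge_take {x : G} {u : List G} {i : ℕ} (hi : i < u.length) :
    Edge x u (x * (u.take i).prod) (x * (u.take (i + 1)).prod) :=
  ⟨u.take i, u[i], u.drop (i+1), by simp, rfl, by
    rw [List.prod_take_succ _ _ hi, mul_assoc]⟩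

lemma edge_iff_take {x : G} {u : List G} {a b : G} (h : Edge x u a b) :
    ∃ i, ∃ _ : i < u.length, a = x * (u.take i).prod ∧ b = x * (u.take (i + 1)).prod := by
  obtain ⟨l₁, c, l₂, rfl, ha, hb⟩ := h
  refine ⟨l₁.length, by simp, by simp [ha], ?_⟩
  rw [List.prod_take_succ _ _ (by simp)]
  simp [hb, mul_assoc]

lemma brel_left {P : Set G} {x y : G} (g : G) (h : BRel P x y) : BRel P (g * x) (g * y) := by
  unfold BRel at *; simpa [mul_assoc] using h

lemma tri_all {P : Set G} (hP : IsPregroupStructure P) (hP6 : AxiomP6 P) {u v w : List G}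
    (hu : Red P u) (hv : Red P v) (hw : IsReducedProd P w) (h : u.prod * v.prod = w.prod)
    (x : G) : Tri P x u (x * u.prod) v w := by
  obtain ⟨w₀, hw0, hr, hp, hT⟩ := exists_tri hP hP6 u 1 v (bp_one hP) hu hv
  obtain ⟨hl, hpre⟩ := prefix_brel hP hP6 (of_red hr hw0) hw (by rw [hp, ← h]; simp)
  have hE : ∀ a b, Edge x w₀ a b → ∃ a' b', Edge x w a' b' ∧ BRel P a a' ∧ BRel P b b' := by
    intro a b he
    obtain ⟨i, hi, rfl, rfl⟩ := edge_iff_take he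
    exact ⟨_, _, edge_take (by omega : i < w.length), brel_left x (hpre i hi.le),
      brel_left x (hpre (i+1) hi)⟩
  have hT := hT x
  rw [mul_one] at hT
  intro a b he
  rcases hT a b he with ⟨a', b', h1, h2, h3⟩ | h1 | ⟨a', b', c, c', h1, h2, h3, h4, h5⟩
  · obtain ⟨a2, b2, h4, h5, h6⟩ := hE _ _ h1
    exact Or.inl ⟨a2, b2, h4, brel_trans h2 h5, brel_trans h3 h6⟩
  · exact Or.inr (Or.inl h1)
  · obtain ⟨a2, b2, h6, h7, h8⟩ := hE _ _ h1
    exact Or.inr (Or.inr ⟨a2, b', b2, c', h6, h2, brel_trans h3 h7, h4,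
      brel_trans (brel_symm hP h8) h5⟩)

end Combi

section Geom

variable {G : Type*} [Group G] {X : Type*} [MetricSpace X]

lemma seg_symm {s : Set X} {x y : X} (h : IsGeodesicSegment s x y) : IsGeodesicSegment s y x := by
  obtain ⟨f, ⟨h0, h1, h2⟩, rfl⟩ := h
  refine ⟨fun t => f (dist x y - t), ⟨by simpa using h1, by simpa [dist_comm y x] using h0, ?_⟩, ?_⟩
  · rw [dist_comm y x]
    rintro a ⟨ha, ha'⟩ b ⟨hb, hb'⟩
    rw [h2 _ ⟨by linarith, by linarith⟩ _ ⟨by linarith, by linarith⟩, abs_sub_comm]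
    congr 1; ring
  · rw [dist_comm y x]
    ext z
    constructor
    · rintro ⟨a, ⟨ha, ha'⟩, rfl⟩
      exact ⟨dist x y - a, ⟨by linarith, by linarith⟩, by simp⟩
    · rintro ⟨a, ⟨ha, ha'⟩, rfl⟩
      exact ⟨dist x y - a, ⟨by linarith, by linarith⟩, rfl⟩

lemma seg_right_mem {s : Set X} {x y : X} (h : IsGeodesicSegment s x y) : y ∈ s := by
  obtain ⟨f, ⟨h0, h1, h2⟩, rfl⟩ := h
  exact ⟨dist x y, ⟨dist_nonneg, le_rfl⟩, h1⟩

lemma seg_dist_le {s : Set X} {x y z : X} (h : IsGeodesicSegment s x y) (hz : z ∈ s) :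
    dist z y ≤ dist x y := by
  obtain ⟨f, ⟨h0, h1, h2⟩, rfl⟩ := h
  obtain ⟨a, ha, rfl⟩ := hz
  have := h2 a ha (dist x y) ⟨dist_nonneg, le_rfl⟩
  rw [h1] at this
  rw [this, abs_le]
  constructor <;> linarith [ha.1, ha.2]

/-- two points on a geodesic -/
lemma seg_two {s : Set X} {x y z z' : X} (h : IsGeodesicSegment s x y) (hz : z ∈ s)
    (hz' : z' ∈ s) : dist z z' = |dist x z - dist x z'| := by
  obtain ⟨f, ⟨h0, h1, h2⟩, rfl⟩ := h
  obtain ⟨a, ha, rfl⟩ := hz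
  obtain ⟨b, hb, rfl⟩ := hz'
  have e : ∀ c ∈ Icc 0 (dist x y), dist x (f c) = c := by
    intro c hc
    have := h2 0 ⟨le_rfl, dist_nonneg⟩ c hc
    rw [h0] at this
    rw [this, zero_sub, abs_neg, abs_of_nonneg hc.1]
  rw [e a ha, e b hb, h2 a ha b hb]

lemma seg_concat (hX : IsGeodesicSpace X) {x y z : X} (h : dist x z + dist z y = dist x y) :
    ∃ s, IsGeodesicSegment s x y ∧ z ∈ s := by
  obtain ⟨_, f, ⟨f0, f1, f2⟩, -⟩ := hX x z
  obtain ⟨_, g, ⟨g0, g1, g2⟩, -⟩ := hX z y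
  set A := dist x z with hA
  set B := dist z y with hB
  have hA0 : 0 ≤ A := dist_nonneg
  have hB0 : 0 ≤ B := dist_nonneg
  let F : ℝ → X := fun t => if t ≤ A then f t else g (t - A)
  have F1 : ∀ t ≤ A, F t = f t := fun t ht => if_pos ht
  have F2 : ∀ t, A ≤ t → F t = g (t - A) := by
    intro t ht
    rcases ht.eq_or_lt with rfl | ht
    · rw [F1 _ le_rfl, f1, sub_self, g0]
    · exact if_neg (not_le.2 ht)
  have mixed : ∀ a b, 0 ≤ a → a ≤ A → A ≤ b → b ≤ A + B → dist (F a) (F b) = b - a := by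
    intro a b ha haA hAb hb
    rw [F1 a haA, F2 b hAb]
    have e1 : dist (f a) z = A - a := by
      have := f2 a ⟨ha, haA⟩ A ⟨hA0, le_rfl⟩
      rw [f1] at this
      rw [this, abs_sub_comm, abs_of_nonneg (by linarith)]
    have e2 : dist z (g (b - A)) = b - A := by
      have := g2 0 ⟨le_rfl, hB0⟩ (b - A) ⟨by linarith, by linarith⟩
      rw [g0] at this
      rw [this, abs_sub_comm, abs_of_nonneg (by linarith)]; ring
    have e3 : dist x (f a) = a := by
      have := f2 0 ⟨le_rfl, hA0⟩ a ⟨ha, haA⟩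
      rw [f0] at this
      rw [this, abs_sub_comm, abs_of_nonneg (by linarith)]; ring
    have e4 : dist (g (b - A)) y = A + B - b := by
      have := g2 (b - A) ⟨by linarith, by linarith⟩ B ⟨hB0, le_rfl⟩
      rw [g1] at this
      rw [this, abs_sub_comm, abs_of_nonneg (by linarith)]; ring
    have t1 := dist_triangle (f a) z (g (b - A))
    have t2 := dist_triangle4 x (f a) (g (b - A)) y
    linarith
  refine ⟨_, ⟨F, ⟨?_, ?_, ?_⟩, rfl⟩, ?_⟩
  · rw [F1 0 hA0, f0]
  · rw [← h, F2 _ (by linarith), add_sub_cancel_left, g1]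
  · rw [← h]
    rintro a ⟨ha, ha'⟩ b ⟨hb, hb'⟩
    rcases le_total a A with h1 | h1 <;> rcases le_total b A with h2 | h2
    · rw [F1 a h1, F1 b h2, f2 a ⟨ha, h1⟩ b ⟨hb, h2⟩]
    · rw [mixed a b ha h1 h2 hb', abs_sub_comm, abs_of_nonneg (by linarith)]
    · rw [dist_comm, mixed b a hb h2 h1 ha', abs_of_nonneg (by linarith)]
    · rw [F2 a h1, F2 b h2, g2 _ ⟨by linarith, by linarith⟩ _ ⟨by linarith, by linarith⟩]
      congr 1; ring
  · exact ⟨A, ⟨hA0, by linarith⟩, by rw [F1 A le_rfl, f1]⟩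

/-- word-metric interval -/
def Intv (ι : G → X) (x y g : G) : Prop :=
  dist (ι x) (ι g) + dist (ι g) (ι y) = dist (ι x) (ι y)

variable {S : Set G} {ι : G → X}

lemma dist_left (hX : IsCayleyGraph S ι) (x g h : G) :
    dist (ι (x * g)) (ι (x * h)) = dist (ι g) (ι h) := by
  rw [hX.dist_eq, hX.dist_eq]; simp [mul_assoc]

lemma intv_left (hX : IsCayleyGraph S ι) (k : G) {x y g : G} (h : Intv ι x y g) :
    Intv ι (k * x) (k * y) (k * g) := by
  unfold Intv at *
  rwa [dist_left hX, dist_left hX, dist_left hX]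

lemma near_nat (hX : IsCayleyGraph S ι) {x y : G} {f : ℝ → X} (hf : IsGeodesicParam f (ι x) (ι y))
    (i : ℕ) (hi : (i : ℝ) ≤ dist (ι x) (ι y)) :
    ∃ g, dist (f i) (ι g) ≤ 1 / 2 ∧ dist (ι x) (ι g) = i ∧ Intv ι x y g := by
  obtain ⟨h0, h1, h2⟩ := hf
  obtain ⟨g, hg⟩ := hX.dense (f i)
  have a1 : dist (ι x) (f i) = i := by
    have := h2 0 ⟨le_rfl, dist_nonneg⟩ i ⟨by positivity, hi⟩
    rw [h0] at this
    rw [this]; simp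
  have a2 : dist (f i) (ι y) = dist (ι x) (ι y) - i := by
    have := h2 i ⟨by positivity, hi⟩ _ ⟨dist_nonneg, le_rfl⟩
    rw [h1] at this
    rw [this, abs_sub_comm, abs_of_nonneg (by linarith)]
  have t1 := dist_triangle (ι x) (f i) (ι g)
  have t2 := dist_triangle_right (ι x) (f i) (ι g)
  have t3 := dist_triangle_left (ι g) (ι y) (f i)
  have t4 := dist_triangle (f i) (ι g) (ι y)
  obtain ⟨n, hn⟩ : ∃ n : ℕ, dist (ι x) (ι y) = n := ⟨_, hX.dist_eq _ _⟩
  obtain ⟨m, hm⟩ : ∃ n : ℕ, dist (ι x) (ι g) = n := ⟨_, hX.dist_eq _ _⟩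
  obtain ⟨k, hk⟩ : ∃ n : ℕ, dist (ι g) (ι y) = n := ⟨_, hX.dist_eq _ _⟩
  have e1 : m = i := by
    have u1 : (m : ℝ) < i + 1 := by linarith
    have u2 : (i : ℝ) < m + 1 := by linarith
    have u1' : m < i + 1 := by exact_mod_cast u1
    have u2' : i < m + 1 := by exact_mod_cast u2
    omega
  have e2 : n = k + i := by
    have u1 : (k : ℝ) + i < n + 1 := by linarith
    have u2 : (n : ℝ) < k + i + 1 := by linarith
    have u1' : k + i < n + 1 := by exact_mod_cast u1
    have u2' : n < k + i + 1 := by exact_mod_cast u2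
    omega
  refine ⟨g, hg, by rw [hm, e1], ?_⟩
  unfold Intv
  rw [hn, hm, hk, e1, e2]; push_cast; ring

lemma near_vertex (hX : IsCayleyGraph S ι) {x y : G} {s : Set X}
    (hs : IsGeodesicSegment s (ι x) (ι y)) {z : X} (hz : z ∈ s) :
    ∃ g, dist z (ι g) ≤ 3 / 2 ∧ Intv ι x y g := by
  obtain ⟨f, hf, rfl⟩ := hs
  obtain ⟨a, ha, rfl⟩ := hz
  have h1 := Nat.floor_le ha.1
  have h2 := Nat.lt_floor_add_one a
  obtain ⟨g, hg, -, hI⟩ := near_nat hX hf ⌊a⌋₊ (h1.trans ha.2)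
  refine ⟨g, ?_, hI⟩
  have := hf.2.2 a ha ⌊a⌋₊ ⟨by positivity, h1.trans ha.2⟩
  rw [abs_of_nonneg (by linarith)] at this
  have := dist_triangle (f a) (f ⌊a⌋₊) (ι g)
  linarith

lemma mem_cth {C : ℝ} (hC : 0 < C) {s : Set X} {z : X} (h : z ∈ cthickening C s) :
    ∃ y ∈ s, dist z y ≤ C + 1 := by
  have := cthickening_subset_thickening' (δ₁ := C) (δ₂ := C + 1) (by linarith) (by linarith) s h
  obtain ⟨y, hy, h⟩ := mem_thickening_iff.1 this
  exact ⟨y, hy, h.le⟩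

variable {P : Set G} {C₁ : ℝ}

lemma near_seg (hX : IsCayleyGraph S ι) (hP : IsPregroupStructure P) (hC : 0 < C₁)
    (hH1 : AxiomH1 P ι C₁) {x y h : G} (hxy : x⁻¹ * y ∈ P) (hh : Intv ι x y h) {s : Set X}
    (hs : IsGeodesicSegment s (ι x) (ι y)) : ∃ z ∈ s, dist (ι h) z ≤ 2 * C₁ + 5 / 2 := by
  obtain ⟨f, hf, rfl⟩ := hs
  obtain ⟨i, hi⟩ : ∃ n : ℕ, dist (ι x) (ι h) = n := ⟨_, hX.dist_eq _ _⟩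
  have hle : (i : ℝ) ≤ dist (ι x) (ι y) := by
    rw [← hi, ← hh]; linarith [dist_nonneg (x := ι h) (y := ι y)]
  obtain ⟨g, hg, hgi, hI⟩ := near_nat hX hf i hle
  refine ⟨f i, ⟨i, ⟨by positivity, hle⟩, rfl⟩, ?_⟩
  have hh' := intv_left hX x⁻¹ hh
  have hI' := intv_left hX x⁻¹ hI
  have d1 : dist (ι 1) (ι (x⁻¹ * h)) = i := by
    rw [← hi, ← dist_left hX x⁻¹ x h]; simp
  have d2 : dist (ι 1) (ι (x⁻¹ * g)) = i := by
    rw [← hgi, ← dist_left hX x⁻¹ x g]; simp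
  rw [inv_mul_cancel] at hh' hI'
  obtain ⟨s1, hs1, hm1⟩ := seg_concat hX.geodesic hh'
  obtain ⟨s2, hs2, hm2⟩ := seg_concat hX.geodesic hI'
  obtain ⟨t, ht⟩ := hX.geodesic (ι (x⁻¹ * y)) (ι (x⁻¹ * y * 1))
  obtain ⟨z, hz, hd⟩ := mem_cth hC ((hH1 _ hxy 1 hP.one_mem s1 t s2 hs1 ht
    (by rwa [mul_one])).1 hm1)
  have hz2 : z ∈ s2 := by
    rcases hz with hz | hz
    · have := seg_dist_le ht hz
      rw [mul_one, dist_self] at this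
      rw [dist_le_zero.1 this]
      exact seg_right_mem hs2
    · exact hz
  have e1 := seg_two hs2 hz2 hm2
  rw [d2] at e1
  have e2 : |dist (ι 1) z - i| ≤ C₁ + 1 := by
    rw [abs_le]
    have t1 := dist_triangle (ι 1) (ι (x⁻¹ * h)) z
    have t2 := dist_triangle_right (ι 1) (ι (x⁻¹ * h)) z
    constructor <;> linarith
  have e3 : dist (ι h) (ι g) ≤ 2 * C₁ + 2 := by
    rw [← dist_left hX x⁻¹]
    have := dist_triangle (ι (x⁻¹ * h)) z (ι (x⁻¹ * g))
    linarith
  have := dist_triangle_right (ι h) (f i) (ι g)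
  linarith

lemma tri_thin (hX : IsCayleyGraph S ι) (hP : IsPregroupStructure P) (hC : 0 < C₁)
    (hH1 : AxiomH1 P ι C₁) {x y w : G} (hxy : x⁻¹ * y ∈ P) (hyw : y⁻¹ * w ∈ P)
    (hxw : x⁻¹ * w ∈ P) {s t r : Set X}
    (hs : IsGeodesicSegment s (ι x) (ι y)) (ht : IsGeodesicSegment t (ι y) (ι w))
    (hr : IsGeodesicSegment r (ι x) (ι w)) {z : X} (hz : z ∈ s) :
    ∃ z' ∈ t ∪ r, dist z z' ≤ 3 * C₁ + 13 / 2 := by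
  obtain ⟨g, hg, hI⟩ := near_vertex hX hs hz
  have hI' := intv_left hX x⁻¹ hI
  rw [inv_mul_cancel] at hI'
  obtain ⟨s1, hs1, hm1⟩ := seg_concat hX.geodesic hI'
  obtain ⟨t1, ht1⟩ := hX.geodesic (ι (x⁻¹ * y)) (ι (x⁻¹ * y * (y⁻¹ * w)))
  obtain ⟨r1, hr1⟩ := hX.geodesic (ι 1) (ι (x⁻¹ * y * (y⁻¹ * w)))
  obtain ⟨ζ, hζ, hd⟩ := mem_cth hC ((hH1 _ hxy _ hyw s1 t1 r1 hs1 ht1 hr1).1 hm1)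
  have hfin : ∀ k : G, dist ζ (ι k) ≤ 3 / 2 → ∀ z' : X, dist (ι (x * k)) z' ≤ 2 * C₁ + 5 / 2 →
      dist z z' ≤ 3 * C₁ + 13 / 2 := by
    intro k hk z' hz'
    have e : dist (ι g) (ι (x * k)) = dist (ι (x⁻¹ * g)) (ι k) := by
      rw [← dist_left hX x (x⁻¹ * g) k, mul_inv_cancel_left]
    have t1 := dist_triangle (ι (x⁻¹ * g)) ζ (ι k)
    have t2 := dist_triangle4 z (ι g) (ι (x * k)) z'
    linarith
  rcases hζ with hζ | hζ
  · obtain ⟨k, hk, hkI⟩ := near_vertex hX ht1 hζ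
    have hkI := intv_left hX x hkI
    simp only [mul_assoc, mul_inv_cancel_left] at hkI
    obtain ⟨z', hz', hd'⟩ := near_seg hX hP hC hH1 hyw hkI ht
    exact ⟨z', Or.inl hz', hfin k hk z' hd'⟩
  · obtain ⟨k, hk, hkI⟩ := near_vertex hX hr1 hζ
    have hkI := intv_left hX x hkI
    simp only [mul_assoc, mul_inv_cancel_left, mul_one] at hkI
    obtain ⟨z', hz', hd'⟩ := near_seg hX hP hC hH1 hxw hkI hr
    exact ⟨z', Or.inr hz', hfin k hk z' hd'⟩

lemma prel_right {x y y' : G} (h : x⁻¹ * y ∈ P) (hb : BRel P y y') : x⁻¹ * y' ∈ P := by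
  have := (hb.2 _ h).1
  simpa [mul_assoc] using this

lemma prel_symm (hP : IsPregroupStructure P) {x y : G} (h : x⁻¹ * y ∈ P) : y⁻¹ * x ∈ P := by
  simpa using hP.inv_mem _ h

lemma half_near (hX : IsCayleyGraph S ι) (hP : IsPregroupStructure P) (hC : 0 < C₁)
    (hH1 : AxiomH1 P ι C₁) {C₀ : ℝ} (hC₀ : ∀ b ∈ BP P, (wordLength S b : ℝ) ≤ C₀)
    {x y y' : G} (hxy : x⁻¹ * y ∈ P) (hb : BRel P y y') {s s' : Set X}
    (hs : IsGeodesicSegment s (ι x) (ι y)) (hs' : IsGeodesicSegment s' (ι x) (ι y'))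
    {z : X} (hz : z ∈ s) : ∃ z' ∈ s', dist z z' ≤ 3 * C₁ + 13 / 2 + C₀ := by
  have h0 : 0 ≤ C₀ := le_trans (by positivity) (hC₀ 1 (bp_one hP))
  obtain ⟨t, ht⟩ := hX.geodesic (ι y) (ι y')
  obtain ⟨z', hz', hd⟩ := tri_thin hX hP hC hH1 hxy hb.1 (prel_right hxy hb) hs ht hs' hz
  rcases hz' with hz' | hz'
  · refine ⟨_, seg_right_mem hs', ?_⟩
    have h1 := seg_dist_le ht hz'
    have h2 := hC₀ _ hb
    rw [← hX.dist_eq] at h2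
    have := dist_triangle z z' (ι y')
    linarith
  · exact ⟨z', hz', by linarith⟩

lemma full_near (hX : IsCayleyGraph S ι) (hP : IsPregroupStructure P) (hC : 0 < C₁)
    (hH1 : AxiomH1 P ι C₁) {C₀ : ℝ} (hC₀ : ∀ b ∈ BP P, (wordLength S b : ℝ) ≤ C₀)
    {x y x' y' : G} (hxy : x⁻¹ * y ∈ P) (ha : BRel P x x') (hb : BRel P y y') {s s' : Set X}
    (hs : IsGeodesicSegment s (ι x) (ι y)) (hs' : IsGeodesicSegment s' (ι x') (ι y'))
    {z : X} (hz : z ∈ s) : ∃ z' ∈ s', dist z z' ≤ 2 * (3 * C₁ + 13 / 2 + C₀) := by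
  obtain ⟨t, ht⟩ := hX.geodesic (ι x) (ι y')
  obtain ⟨z1, hz1, hd1⟩ := half_near hX hP hC hH1 hC₀ hxy hb hs ht hz
  obtain ⟨z2, hz2, hd2⟩ := half_near hX hP hC hH1 hC₀ (prel_symm hP (prel_right hxy hb)) ha
    (seg_symm ht) (seg_symm hs') hz1
  exact ⟨z2, hz2, by linarith [dist_triangle z z1 z2]⟩

/-- weak path predicate -/
def PathW (ι : G → X) (x : G) (u : List G) (pa : Set X) : Prop :=
  (∀ z ∈ pa, ∃ a b s, Edge x u a b ∧ IsGeodesicSegment s (ι a) (ι b) ∧ z ∈ s) ∧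
  (∀ a b, Edge x u a b → ∃ s, IsGeodesicSegment s (ι a) (ι b) ∧ s ⊆ pa)

lemma pathW_of {x : G} {u : List G} {pa : Set X} (h : IsPathOf ι x u pa) : PathW ι x u pa := by
  obtain ⟨segs, h1, rfl⟩ := h
  constructor
  · intro z hz
    obtain ⟨i, hi⟩ := mem_iUnion.1 hz
    exact ⟨_, _, _, edge_take i.2, h1 i, hi⟩
  · intro a b he
    obtain ⟨i, hi, rfl, rfl⟩ := edge_iff_take he
    exact ⟨_, h1 ⟨i, hi⟩, subset_iUnion segs _⟩

lemma pathW_inv {x y : G} {u : List G} {pa : Set X} (h : PathW ι x u pa) (hy : x * u.prod = y) :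
    PathW ι y (invl u) pa := by
  subst hy
  constructor
  · intro z hz
    obtain ⟨a, b, s, he, hs, hz⟩ := h.1 z hz
    exact ⟨b, a, s, edge_invl he, seg_symm hs, hz⟩
  · intro a b he
    have := edge_invl he
    rw [invl_invl, invl_prod, mul_inv_cancel_right] at this
    obtain ⟨s, hs, hsub⟩ := h.2 _ _ this
    exact ⟨s, seg_symm hs, hsub⟩

lemma edge_prel {x : G} {u : List G} {a b : G} (hu : Red P u) (h : Edge x u a b) :
    a⁻¹ * b ∈ P := by
  obtain ⟨l₁, c, l₂, rfl, ha, hb⟩ := h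
  have := hu.1 c (by simp)
  rw [ha, hb]
  simpa [mul_assoc] using this

lemma one_side (hX : IsCayleyGraph S ι) (hP : IsPregroupStructure P) (hP6 : AxiomP6 P)
    (hC : 0 < C₁)
    (hH1 : AxiomH1 P ι C₁) {C₀ : ℝ} (hC₀ : ∀ b ∈ BP P, (wordLength S b : ℝ) ≤ C₀)
    {x y : G} {u v w : List G} (hu : Red P u) (hv : Red P v) (hw : Red P w) (hw0 : w ≠ [])
    (h : u.prod * v.prod = w.prod) (hy : x * u.prod = y) {pa qa ra : Set X}
    (hp : PathW ι x u pa) (hq : PathW ι y v qa) (hr : PathW ι x w ra) :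
    pa ⊆ cthickening (3 * (3 * C₁ + 13 / 2 + C₀)) (qa ∪ ra) := by
  subst hy
  have h0 : 0 ≤ C₀ := le_trans (by positivity) (hC₀ 1 (bp_one hP))
  intro z hz
  suffices H : ∃ z' ∈ qa ∪ ra, dist z z' ≤ 3 * (3 * C₁ + 13 / 2 + C₀) by
    obtain ⟨z', hz', hd⟩ := H
    exact mem_cthickening_of_dist_le z z' _ _ hz' hd
  obtain ⟨a, b, s, he, hs, hz⟩ := hp.1 z hz
  have hab := edge_prel hu he
  rcases tri_all hP hP6 hu hv (of_red hw hw0) h x a b he with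
    ⟨a', b', h1, h2, h3⟩ | ⟨a', b', h1, h2, h3⟩ | ⟨a', b', c, c', h1, h2, h3, h4, h5⟩
  · obtain ⟨s', hs', hsub⟩ := hr.2 _ _ h1
    obtain ⟨z', hz', hd⟩ := full_near hX hP hC hH1 hC₀ hab h2 h3 hs hs' hz
    exact ⟨z', Or.inr (hsub hz'), by linarith⟩
  · obtain ⟨s', hs', hsub⟩ := hq.2 _ _ h1
    obtain ⟨z', hz', hd⟩ := full_near hX hP hC hH1 hC₀ hab h2 h3 hs (seg_symm hs') hz
    exact ⟨z', Or.inl (hsub hz'), by linarith⟩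
  · obtain ⟨r', hr', hrsub⟩ := hr.2 _ _ h1
    obtain ⟨t', ht', htsub⟩ := hq.2 _ _ h2
    have p1 : a'⁻¹ * c ∈ P := edge_prel hw h1
    have p2 : b'⁻¹ * c' ∈ P := edge_prel hv h2
    have hac : a⁻¹ * c ∈ P :=
      prel_symm hP (prel_right (prel_symm hP p1) (brel_symm hP h3))
    have hbc : b⁻¹ * c ∈ P :=
      prel_symm hP (prel_right (prel_symm hP (prel_right p2 (brel_symm hP h5)))
        (brel_symm hP h4))
    obtain ⟨t, ht⟩ := hX.geodesic (ι b) (ι c)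
    obtain ⟨r, hr0⟩ := hX.geodesic (ι a) (ι c)
    obtain ⟨z1, hz1, hd1⟩ := tri_thin hX hP hC hH1 hab hbc hac hs ht hr0 hz
    rcases hz1 with hz1 | hz1
    · obtain ⟨z', hz', hd⟩ := full_near hX hP hC hH1 hC₀ hbc h4 h5 ht ht' hz1
      exact ⟨z', Or.inl (htsub hz'), by linarith [dist_triangle z z1 z']⟩
    · obtain ⟨z', hz', hd⟩ := full_near hX hP hC hH1 hC₀ hac h3 (brel_refl hP c) hr0 hr' hz1
      exact ⟨z', Or.inr (hrsub hz'), by linarith [dist_triangle z z1 z']⟩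

end Geom

/-- the triangle formed by paths defined by reduced products
representing `f`, `g` (based at `f`) and `fg` is uniformly thin. -/
theorem reduced_product_triangles_thin {G : Type*} [Group G] {X : Type*} [MetricSpace X]
    (S : Set G) (hSfin : S.Finite) (ι : G → X) (hX : IsCayleyGraph S ι)
    (P : Set G) (hP : IsPregroupStructure P)
    (hP6 : AxiomP6 P) (hH0 : AxiomH0 P)
    (C₁ : ℝ) (hC₁ : 0 < C₁) (hH1 : AxiomH1 P ι C₁) :
    ∃ D₃ > (0 : ℝ), ∀ f g : G, ∀ u v w : List G,
      IsReducedProd P u → IsReducedProd P v → IsReducedProd P w →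
      u.prod = f → v.prod = g → w.prod = f * g →
      ∀ pa qa ra : Set X,
        IsPathOf ι 1 u pa → IsPathOf ι f v qa → IsPathOf ι 1 w ra →
        ThinTriangle D₃ pa qa ra := by
  obtain ⟨C₀, hC₀⟩ : ∃ C₀ : ℝ, ∀ b ∈ BP P, (wordLength S b : ℝ) ≤ C₀ := by
    obtain ⟨C, hC⟩ := (hH0.image (fun b => (wordLength S b : ℝ))).bddAbove
    exact ⟨C, fun b hb => hC ⟨b, hb, rfl⟩⟩
  have h0 : 0 ≤ C₀ := le_trans (by positivity) (hC₀ 1 (bp_one hP))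
  refine ⟨3 * (3 * C₁ + 13 / 2 + C₀), by positivity, ?_⟩
  intro f g u v w hu hv hw huf hvg hwfg pa qa ra hpa hqa hra
  have ru := red_of hu
  have rv := red_of hv
  have rw' := red_of hw
  have pu := pathW_of hpa
  have pv := pathW_of hqa
  have pw := pathW_of hra
  have inv_ne : ∀ l : List G, l ≠ [] → invl l ≠ [] := by
    intro l hl; simpa [invl] using hl
  refine ⟨?_, ?_, ?_⟩
  · exact one_side hX hP hP6 hC₁ hH1 hC₀ ru rv rw' hw.1 (by rw [huf, hvg, hwfg]) (by simp [huf])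
      pu pv pw
  · rw [union_comm]
    exact one_side hX hP hP6 hC₁ hH1 hC₀ rv (red_invl hP rw') (red_invl hP ru) (inv_ne u hu.1)
      (by rw [invl_prod, invl_prod, huf, hvg, hwfg]; simp) (by rw [hvg])
      pv (pathW_inv pw (by rw [hwfg]; simp)) (pathW_inv pu (by simp [huf]))
  · rw [union_comm]
    exact one_side hX hP hP6 hC₁ hH1 hC₀ rw' (red_invl hP rv) ru hu.1
      (by rw [invl_prod, huf, hvg, hwfg]; simp) (by rw [hwfg, one_mul])
      pw (pathW_inv pv (by rw [hvg])) pu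
end

section
/- B_P is a subgroup of G contained in P: 1 ∈ B_P; if b ∈ B_P then b^{-1} ∈ B_P; and if b, b' ∈ B_P then bb' ∈ P and bb' ∈ B_P. -/
open Metric Set

/-- `B_P` is a subgroup of `G` contained in `P`. -/
theorem BP_subgroup {G : Type*} [Group G] (P : Set G) (hP : IsPregroupStructure P) :
    (1 : G) ∈ BP P ∧ (∀ b ∈ BP P, b⁻¹ ∈ BP P) ∧
      ∀ b ∈ BP P, ∀ b' ∈ BP P, b * b' ∈ P ∧ b * b' ∈ BP P := by
  refine ⟨⟨hP.one_mem, fun z hz => ⟨by simpa using hz, by simpa using hz⟩⟩, ?_, ?_⟩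
  · rintro b ⟨hb, h⟩
    refine ⟨hP.inv_mem b hb, fun z hz => ⟨?_, ?_⟩⟩
    · have := hP.inv_mem _ (h z⁻¹ (hP.inv_mem z hz)).2
      simpa using this
    · have := hP.inv_mem _ (h z⁻¹ (hP.inv_mem z hz)).1
      simpa using this
  · rintro b ⟨hb, h⟩ b' ⟨hb', h'⟩
    refine ⟨(h' b hb).1, (h' b hb).1, fun z hz => ⟨?_, ?_⟩⟩
    · rw [← mul_assoc]
      exact (h' _ (h z hz).1).1
    · rw [mul_assoc]
      exact (h _ (h' z hz).2).2
end

section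
/- Suppose P satisfies axiom (P6). If (u_1,…,u_n) and (v_1,…,v_n) are reduced P-products with u_1⋯u_n = v_1⋯v_n in G, n ≥ 2, and a_0 = a_n = 1 and a_1,…,a_{n−1} ∈ P are such that a_{i−1}^{-1} u_i a_i ∈ P and v_i = a_{i−1}^{-1} u_i a_i for all 1 ≤ i ≤ n, then a_i ∈ B_P for all 1 ≤ i ≤ n−1. -/
open Metric Set

/-- under (P6), the interleaving elements between two reduced
products of length `n ≥ 2` representing the same element lie in `B_P`. -/
theorem interleaving_elements_mem_BP {G : Type*} [Group G]
    (P : Set G) (hP : IsPregroupStructure P) (hP6 : AxiomP6 P)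
    (u v : List G) (hu : IsReducedProd P u) (hv : IsReducedProd P v)
    (heq : u.prod = v.prod) (hn : 2 ≤ u.length) (hlen : u.length = v.length)
    (a : ℕ → G) (ha0 : a 0 = 1) (han : a u.length = 1)
    (haP : ∀ i : ℕ, 0 < i → i < u.length → a i ∈ P)
    (hkey : ∀ i : ℕ, ∀ hu' : i < u.length, ∀ hv' : i < v.length,
      (a i)⁻¹ * u[i] * a (i + 1) ∈ P ∧ v[i] = (a i)⁻¹ * u[i] * a (i + 1)) :
    ∀ i : ℕ, 1 ≤ i → i ≤ u.length - 1 → a i ∈ BP P := by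
  have htake : ∀ i : ℕ, i ≤ u.length → (v.take i).prod = (u.take i).prod * a i := by
    intro i
    induction i with
    | zero => intro _; simp [ha0]
    | succ k ih =>
      intro hk
      have h1 : k < u.length := hk
      have h2 : k < v.length := hlen ▸ h1
      rw [List.prod_take_succ v k h2, List.prod_take_succ u k h1, ih h1.le, (hkey k h1 h2).2]
      group
  have hdrop : ∀ i : ℕ, i ≤ u.length → (v.drop i).prod = (a i)⁻¹ * (u.drop i).prod := by
    intro i hi
    have h1 := List.prod_take_mul_prod_drop u i
    have h2 := List.prod_take_mul_prod_drop v i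
    rw [htake i hi, ← heq, ← h1, mul_assoc] at h2
    have h3 := mul_left_cancel h2
    rw [← h3]
    group
  have hred : ∀ w : List G, IsReducedProd P w → ∀ i, i < w.length →
      IsReducedProd P (w.drop i) := by
    intro w hw i hi
    refine ⟨?_, ?_, ?_⟩
    · intro h
      have := congrArg List.length h
      simp at this
      omega
    · intro x hx
      exact hw.2.1 x (List.mem_of_mem_drop hx)
    · intro j hj
      have hj' : i + j + 1 < w.length := by
        simp at hj
        omega
      have := hw.2.2 (i + j) hj'
      simpa [List.getElem_drop, add_assoc] using this
  have hleft : ∀ i : ℕ, 0 < i → ∀ hi : i < u.length, (a i)⁻¹ * u[i] ∈ P := by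
    intro i h0 hi
    by_contra hc
    have hi2 : i < v.length := hlen ▸ hi
    have r1 := hred u hu i hi
    have r2 := hred v hv i hi2
    have r3 : IsReducedProd P ((a i)⁻¹ :: u.drop i) := by
      refine ⟨by simp, ?_, ?_⟩
      · intro x hx
        rcases List.mem_cons.1 hx with h | h
        · rw [h]; exact hP.inv_mem _ (haP i h0 hi)
        · exact r1.2.1 x h
      · intro j hj
        cases j with
        | zero => simpa using hc
        | succ j =>
          have := r1.2.2 j (by simpa using hj)
          simpa using this
    have := (hP.uniq _ _ r3 r2 (by rw [hdrop i hi.le, List.prod_cons])).1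
    simp at this
    omega
  have main : ∀ i : ℕ, i < u.length → a i ∈ BP P := by
    intro i
    induction i with
    | zero =>
      intro _
      rw [ha0]
      exact ⟨hP.one_mem, fun z hz => by simpa using hz⟩
    | succ k ih =>
      intro hk
      have h1 : k < u.length := Nat.lt_of_succ_lt hk
      have h2 : k < v.length := hlen ▸ h1
      refine hP6 u[k] (hu.2.1 _ (List.getElem_mem h1)) u[k+1] (hu.2.1 _ (List.getElem_mem hk))
        (hu.2.2 k hk) _ (haP _ k.succ_pos hk) ?_ (hleft _ k.succ_pos hk)
      have h3 := ((ih h1).2 _ (hkey k h1 h2).1).2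
      simpa [mul_assoc] using h3
  intro i h1 h2
  exact main i (by omega)
end

section
/- Suppose P satisfies axioms (P6) and (H0). Then every g ∈ G has only finitely many representations as a reduced P-product: the set of tuples (u_1,…,u_n) that are reduced P-products with u_1⋯u_n = g in G is finite. -/
open Metric Set

theorem BP_inv_mul {G : Type*} [Group G] {P : Set G} (hP : IsPregroupStructure P)
    {b z : G} (hb : b ∈ BP P) (hz : z ∈ P) : b⁻¹ * z ∈ P := by
  have h := hP.inv_mem _ (hb.2 _ (hP.inv_mem _ hz)).1
  simpa using h

theorem isReducedProd_pair {G : Type*} [Group G] {P : Set G} {x y : G}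
    (hx : x ∈ P) (hy : y ∈ P) (h : x * y ∉ P) : IsReducedProd P [x, y] := by
  refine ⟨by simp, by simp [hx, hy], ?_⟩
  intro i hi
  have : i = 0 := by simp at hi; omega
  subst this
  simpa using h

theorem BP_step {G : Type*} [Group G] {P : Set G} (hP : IsPregroupStructure P)
    (hP6 : AxiomP6 P) {p a q x y : G} (hp : p ∈ BP P) (ha : a ∈ P) (hq : q ∈ P)
    (hx : x ∈ P) (hy : y ∈ P) (hxy : x * y ∉ P)
    (h1 : p⁻¹ * x * a ∈ P) (h2 : a⁻¹ * y * q ∈ P)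
    (h12 : (p⁻¹ * x * a) * (a⁻¹ * y * q) ∉ P) : a ∈ BP P := by
  have hxa : x * a ∈ P := by
    have := (hp.2 _ h1).2
    simpa [mul_assoc] using this
  refine hP6 x hx y hy hxy a ha hxa ?_
  by_contra hn
  have hr1 := isReducedProd_pair (hP.inv_mem _ ha) hy hn
  have hr2 : IsReducedProd P [a⁻¹ * y * q, q⁻¹] :=
    isReducedProd_pair h2 (hP.inv_mem _ hq) (by simpa using hn)
  obtain ⟨-, c, c0, -, cP, hc⟩ := hP.uniq _ _ hr1 hr2 (by simp)
  have hc1 := cP 1 (by simp) (by simp)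
  have hv := (hc 0 (by simp) (by simp)).2
  simp only [List.getElem_cons_zero, c0, inv_one, one_mul, zero_add, mul_assoc,
    mul_right_inj] at hv
  rw [← hv] at hc1
  have hB : y * q ∈ BP P := by
    refine hP6 _ (hP.inv_mem _ ha) _ hy hn _ hc1 (by simpa [mul_assoc] using h2) ?_
    simpa using hP.inv_mem _ hq
  apply h12
  have := BP_inv_mul hP hp (hB.2 _ hx).1
  simpa [mul_assoc] using this

/-- under (P6) and (H0), every `g ∈ G` has only finitely many
representations as a reduced `P`-product. -/
theorem finitely_many_reduced_reps {G : Type*} [Group G]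
    (S : Set G) (hSfin : S.Finite) (hgen : Subgroup.closure S = ⊤)
    (P : Set G) (hP : IsPregroupStructure P)
    (hP6 : AxiomP6 P) (hH0 : AxiomH0 P) (g : G) :
    {u : List G | IsReducedProd P u ∧ u.prod = g}.Finite := by
  rcases Set.eq_empty_or_nonempty {u : List G | IsReducedProd P u ∧ u.prod = g} with he | ⟨u, hu, hug⟩
  · rw [he]; exact Set.finite_empty
  have h1B : (1 : G) ∈ BP P := ⟨hP.one_mem, fun z hz => by simp [hz]⟩
  have : Finite (BP P) := hH0
  refine (Set.finite_range (fun b : Fin (u.length + 1) → BP P =>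
    List.ofFn (fun i : Fin u.length =>
      ((b i.castSucc : G))⁻¹ * u[i] * (b i.succ : G)))).subset ?_
  rintro v ⟨hv, hvg⟩
  obtain ⟨hlen, a, a0, an, aP, ha⟩ := hP.uniq u v hu hv (hug.trans hvg.symm)
  have aP' : ∀ i, 0 < i → i ≤ u.length → a i ∈ P := by
    intro i h0 hi
    rcases hi.lt_or_eq with h | h
    · exact aP i h0 h
    · rw [h, an]; exact hP.one_mem
  have aB : ∀ i, i ≤ u.length → a i ∈ BP P := by
    intro i
    induction i with
    | zero => intro _; rw [a0]; exact h1B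
    | succ i ih =>
      intro hi
      rcases hi.lt_or_eq with h | h
      · have e1 := ha i (by omega) (by omega)
        have e2 := ha (i + 1) h (by omega)
        refine BP_step hP hP6 (ih (by omega)) (aP' _ (by omega) hi)
          (aP' (i + 2) (by omega) (by omega))
          (hu.2.1 _ (List.getElem_mem (by omega))) (hu.2.1 _ (List.getElem_mem h))
          (hu.2.2 i h) e1.1 e2.1 ?_
        have := hv.2.2 i (by omega)
        rwa [e1.2, e2.2] at this
      · rw [h, an]; exact h1B
  refine ⟨fun i => ⟨a i, aB i (by omega)⟩, ?_⟩
  apply List.ext_getElem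
  · simp [hlen]
  · intro i h1 h2
    have := (ha i (by omega) h2).2
    simp [this]
end

section
/- For every D > 0 there exists δ > 0, depending only on D, with the following property. Let (X, d) be a geodesic metric space and suppose that for every pair of points x, y ∈ X there is a path η(x,y) : [0,1] → X with η(x,y)(0) = x and η(x,y)(1) = y such that: (a) if d(x,y) ≤ 1, then the diameter of the image of η(x,y) is at most D; (b) for all x, y ∈ X and all 0 ≤ s ≤ t ≤ 1, the Hausdorff distance between η(x,y)([s,t]) and the image of η(η(x,y)(s), η(x,y)(t)) is at most D; (c) for all x, y, z ∈ X, the image of η(x,y) is contained in the closed D-neighborhood of the union of the images of η(x,z) and η(z,y). Then X is δ-hyperbolic: for all x, y, z, v ∈ X, (x·y)_v ≥ min{(x·z)_v, (z·y)_v} − 2δ, where (x·y)_v = (1/2)(d(x,v) + d(y,v) − d(x,y)). -/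
open Metric Set

theorem hc_log {X : Type*} [MetricSpace X] (D : ℝ) (hD : 0 < D) (I : X → X → Set X)
    (hA : ∀ x y, dist x y ≤ 1 → ∀ p ∈ I x y, dist p x ≤ D)
    (hC : ∀ x y z, ∀ p ∈ I x y, (∃ w ∈ I x z, dist p w ≤ D) ∨ (∃ w ∈ I z y, dist p w ≤ D))
    (k : ℕ) : ∀ (c : ℝ → X) (L : ℝ), L ≤ 2 ^ k →
      (∀ s ∈ Icc (0:ℝ) 1, ∀ t ∈ Icc (0:ℝ) 1, dist (c s) (c t) ≤ L * |s - t|) →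
      ∀ p ∈ I (c 0) (c 1), ∃ t ∈ Icc (0:ℝ) 1, dist p (c t) ≤ D * (k + 1) := by
  induction k with
  | zero =>
    intro c L hL hc p hp
    refine ⟨0, by simp, ?_⟩
    have h := hc 0 (by simp) 1 (by simp)
    simp at h hL
    simpa using hA _ _ (by linarith) p hp
  | succ k ih =>
    intro c L hL hc p hp
    rw [pow_succ] at hL
    rcases hC _ _ (c (1/2)) p hp with ⟨w, hw, hpw⟩ | ⟨w, hw, hpw⟩
    · obtain ⟨t, ht, h⟩ := ih (fun τ => c (τ / 2)) (L / 2) (by linarith) (by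
        intro s hs t ht
        have := hc (s/2) ⟨by linarith [hs.1], by linarith [hs.2]⟩ (t/2)
          ⟨by linarith [ht.1], by linarith [ht.2]⟩
        have e : |s/2 - t/2| = |s - t| / 2 := by
          rw [← sub_div, abs_div, abs_of_pos (by norm_num : (0:ℝ) < 2)]
        rw [e] at this
        show dist (c (s/2)) (c (t/2)) ≤ _
        linarith) w (by simpa using hw)
      refine ⟨t / 2, ⟨by linarith [ht.1], by linarith [ht.2]⟩, ?_⟩
      have := dist_triangle p w (c (t/2))
      push_cast
      linarith
    · obtain ⟨t, ht, h⟩ := ih (fun τ => c ((1 + τ) / 2)) (L / 2) (by linarith) (by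
        intro s hs t ht
        have := hc ((1+s)/2) ⟨by linarith [hs.1], by linarith [hs.2]⟩ ((1+t)/2)
          ⟨by linarith [ht.1], by linarith [ht.2]⟩
        have e : |(1+s)/2 - (1+t)/2| = |s - t| / 2 := by
          rw [← sub_div, abs_div, abs_of_pos (by norm_num : (0:ℝ) < 2)]
          congr 2; ring
        rw [e] at this
        show dist (c ((1+s)/2)) (c ((1+t)/2)) ≤ _
        linarith) w (by norm_num at hw ⊢; exact hw)
      refine ⟨(1 + t) / 2, ⟨by linarith [ht.1], by linarith [ht.2]⟩, ?_⟩
      have := dist_triangle p w (c ((1+t)/2))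
      push_cast
      linarith

theorem hc_seg {X : Type*} [MetricSpace X] {f : ℝ → X} {x y : X} (hf : IsGeodesicParam f x y)
    {u v : ℝ} (hu : u ∈ Icc 0 (dist x y)) (hv : v ∈ Icc 0 (dist x y)) :
    ∃ c : ℝ → X, c 0 = f u ∧ c 1 = f v ∧ (∀ t ∈ Icc (0:ℝ) 1, c t ∈ f '' Icc 0 (dist x y)) ∧
      (∀ s ∈ Icc (0:ℝ) 1, ∀ t ∈ Icc (0:ℝ) 1,
        dist (c s) (c t) ≤ dist (f u) (f v) * |s - t|) := by
  have key : ∀ t ∈ Icc (0:ℝ) 1, u + t * (v - u) ∈ Icc 0 (dist x y) := by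
    intro t ht
    have := (convex_Icc 0 (dist x y)) hu hv (sub_nonneg.2 ht.2) ht.1 (by ring)
    simp only [smul_eq_mul] at this
    convert this using 1
    ring
  refine ⟨fun t => f (u + t * (v - u)), by simp, by simp, fun t ht => ⟨_, key t ht, rfl⟩, ?_⟩
  intro s hs t ht
  show dist (f (u + s * (v - u))) (f (u + t * (v - u))) ≤ _
  rw [hf.2.2 _ (key s hs) _ (key t ht), hf.2.2 _ hu _ hv, ← abs_mul, abs_sub_comm,
    show u + t * (v - u) - (u + s * (v - u)) = (u - v) * (s - t) by ring]

/-- distance along a geodesic -/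
theorem hc_mem {X : Type*} [MetricSpace X] {f : ℝ → X} {x y q : X} (hf : IsGeodesicParam f x y)
    (hq : q ∈ f '' Icc 0 (dist x y)) : dist x q + dist q y = dist x y := by
  obtain ⟨t, ht, rfl⟩ := hq
  have h0 := hf.2.2 0 ⟨le_rfl, dist_nonneg⟩ t ht
  have h1 := hf.2.2 t ht (dist x y) ⟨dist_nonneg, le_rfl⟩
  rw [hf.1] at h0
  rw [hf.2.1] at h1
  rw [h0, h1, abs_sub_comm, abs_of_nonneg (by linarith [ht.1]), abs_sub_comm,
    abs_of_nonneg (by linarith [ht.2])]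
  ring

theorem hc_ball {X : Type*} [MetricSpace X] (h : IsGeodesicSpace X) (x y : X) :
    ∃ c : ℝ → X, c 0 = x ∧ c 1 = y ∧
      (∀ t ∈ Icc (0:ℝ) 1, dist x (c t) ≤ dist x y ∧ dist y (c t) ≤ dist x y) ∧
      (∀ s ∈ Icc (0:ℝ) 1, ∀ t ∈ Icc (0:ℝ) 1, dist (c s) (c t) ≤ dist x y * |s - t|) := by
  obtain ⟨_, f, hf, -⟩ := h x y
  obtain ⟨c, h0, h1, h2, h3⟩ := hc_seg hf (u := 0) (v := dist x y) ⟨le_rfl, dist_nonneg⟩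
    ⟨dist_nonneg, le_rfl⟩
  rw [hf.1] at h0 h3
  rw [hf.2.1] at h1 h3
  refine ⟨c, h0, h1, fun t ht => ?_, h3⟩
  have := hc_mem hf (h2 t ht)
  rw [dist_comm y]
  constructor <;> linarith [dist_nonneg (x := x) (y := c t), dist_nonneg (x := c t) (y := y)]

theorem hc_const (D : ℝ) (hD : 0 < D) : ∃ K : ℕ, ∀ R : ℝ,
    (∀ k : ℕ, 6 * R ≤ 2 ^ k → R ≤ D * (k + 4)) → R ≤ 2 ^ K := by
  have h := tendsto_pow_const_div_const_pow_of_one_lt 1 (by norm_num : (1:ℝ) < 2)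
  have h2 := h.eventually (gt_mem_nhds (by positivity : 0 < 1 / (36 * D)))
  obtain ⟨K, hK⟩ := Filter.eventually_atTop.1 (h2.and (Filter.eventually_ge_atTop 1))
  refine ⟨K, fun R hR => ?_⟩
  by_contra! hlt
  have hp : (0:ℝ) < 2 ^ K := by positivity
  have hex : ∃ k : ℕ, 6 * R ≤ 2 ^ k := by
    obtain ⟨k, hk⟩ := pow_unbounded_of_one_lt (6 * R) (by norm_num : (1:ℝ) < 2)
    exact ⟨k, hk.le⟩
  classical
  have hs := Nat.find_spec hex
  have hm := fun m => Nat.find_min hex (m := m)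
  generalize Nat.find hex = n at hs hm
  have hKn : K < n := by
    by_contra! hle
    have : (2:ℝ) ^ n ≤ 2 ^ K := pow_le_pow_right₀ (by norm_num) hle
    linarith
  obtain ⟨k, rfl⟩ : ∃ k, n = k + 1 := ⟨n - 1, by omega⟩
  have h3 := hm k (by omega)
  have h4 := hR _ hs
  obtain ⟨h5, h6⟩ := hK k (by omega)
  have h7 : (1:ℝ) ≤ k := by exact_mod_cast h6
  have hp' : (0:ℝ) < 2 ^ k := by positivity
  rw [pow_one, div_lt_div_iff₀ hp' (by positivity)] at h5
  push_cast at h4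
  push Not at h3
  nlinarith

theorem hc_main (D : ℝ) (hD : 0 < D) : ∃ R₀ > (0:ℝ), ∀ (X : Type*) [MetricSpace X],
    IsGeodesicSpace X → ∀ η : X → X → ℝ → X,
    (∀ x y : X, ContinuousOn (η x y) (Icc (0 : ℝ) 1)) →
    (∀ x y : X, η x y 0 = x) → (∀ x y : X, η x y 1 = y) →
    (∀ x y, dist x y ≤ 1 → ∀ p ∈ η x y '' Icc (0:ℝ) 1, dist p x ≤ D) →
    (∀ x y s r t, 0 ≤ s → s ≤ r → r ≤ t → t ≤ 1 →
      ∃ w ∈ η (η x y s) (η x y t) '' Icc (0:ℝ) 1, dist (η x y r) w ≤ D) →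
    (∀ x y z, ∀ p ∈ η x y '' Icc (0:ℝ) 1, (∃ w ∈ η x z '' Icc (0:ℝ) 1, dist p w ≤ D) ∨
      (∃ w ∈ η z y '' Icc (0:ℝ) 1, dist p w ≤ D)) →
    ∀ x y, ∀ p ∈ η x y '' Icc (0:ℝ) 1, dist x p + dist p y ≤ dist x y + 2 * R₀ := by
  obtain ⟨K, hK⟩ := hc_const D hD
  refine ⟨2 ^ K, by positivity, ?_⟩
  intro X _ hX η hcont h0 h1 hA hB hC x y
  obtain ⟨_, f, hf, -⟩ := hX x y
  set G := f '' Icc 0 (dist x y) with hG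
  have hl0 : (0:ℝ) ∈ Icc 0 (dist x y) := ⟨le_rfl, dist_nonneg⟩
  have hl1 : dist x y ∈ Icc 0 (dist x y) := ⟨dist_nonneg, le_rfl⟩
  have hxG : x ∈ G := ⟨0, hl0, hf.1⟩
  have hyG : y ∈ G := ⟨_, hl1, hf.2.1⟩
  have hfc : ContinuousOn f (Icc 0 (dist x y)) := by
    have : LipschitzOnWith 1 f (Icc 0 (dist x y)) := by
      apply LipschitzOnWith.of_dist_le_mul
      intro a ha b hb
      rw [hf.2.2 a ha b hb, Real.dist_eq]; simp
    exact this.continuousOn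
  have hGc : IsCompact G := isCompact_Icc.image_of_continuousOn hfc
  have hne : G.Nonempty := ⟨x, hxG⟩
  obtain ⟨t0, ht0, hmax⟩ := isCompact_Icc.exists_isMaxOn (s := Icc (0:ℝ) 1) ⟨0, by simp⟩
    ((continuous_infDist_pt G).comp_continuousOn (hcont x y))
  set p := η x y t0 with hp
  set R := infDist p G with hRdef
  have hmax' : ∀ t ∈ Icc (0:ℝ) 1, infDist (η x y t) G ≤ R := fun t ht => hmax ht
  have hR0 : 0 ≤ R := infDist_nonneg
  have hRG : ∀ q ∈ G, R ≤ dist p q := fun q hq => infDist_le_dist_of_mem hq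
  -- the side points
  have side : ∀ l r e : ℝ, 0 ≤ l → l ≤ r → r ≤ 1 → e ∈ Icc l r → t0 ∈ Icc l r →
      (e = 0 ∨ e = 1) → (t0 = l ∨ t0 = r) → 
      ∃ s ∈ Icc l r, ∃ u ∈ Icc 0 (dist x y), dist (η x y s) p ≤ 2 * R ∧
        dist (η x y s) (f u) ≤ R ∧
        ∀ q, dist (η x y s) q ≤ dist (η x y s) (f u) → R ≤ dist p q := by
    intro l r e hl hlr hr he ht0' he01 htlr
    have hsub : Icc l r ⊆ Icc (0:ℝ) 1 := Icc_subset_Icc hl hr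
    by_cases hc : dist (η x y e) p ≤ 2 * R
    · have : ∃ u ∈ Icc 0 (dist x y), f u = η x y e := by
        rcases he01 with rfl | rfl
        · exact ⟨0, hl0, by rw [hf.1, h0]⟩
        · exact ⟨_, hl1, by rw [hf.2.1, h1]⟩
      obtain ⟨u, hu, hue⟩ := this
      refine ⟨e, he, u, hu, hc, by simp [hue, hR0], ?_⟩
      intro q hq
      rw [hue, dist_self] at hq
      have : η x y e = q := dist_le_zero.1 hq
      rw [← this, ← hue]
      exact hRG _ ⟨u, hu, rfl⟩
    · push Not at hc
      have hpc : IsPreconnected (Icc l r) := isPreconnected_Icc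
      have hcd : ContinuousOn (fun t => dist (η x y t) p) (Icc l r) :=
        (continuous_id.dist continuous_const).comp_continuousOn ((hcont x y).mono hsub)
      have := hpc.intermediate_value ht0' he hcd
      obtain ⟨s, hs, hs2⟩ := this (show 2 * R ∈ _ from ⟨by simp [← hp, hR0], hc.le⟩)
      obtain ⟨g, ⟨u, hu, rfl⟩, hg⟩ := hGc.exists_infDist_eq_dist hne (η x y s)
      have hle := hmax' s (hsub hs)
      simp only at hs2
      refine ⟨s, hs, u, hu, hs2.le, by linarith, fun q hq => ?_⟩
      have := dist_triangle (η x y s) q p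
      rw [dist_comm q p] at this
      linarith
  have hR : R ≤ 2 ^ K := by
    apply hK
    intro k hk
    obtain ⟨s, hs, u, hu, hs1, hs2, hs3⟩ := side 0 t0 0 le_rfl ht0.1 ht0.2 ⟨le_rfl, ht0.1⟩
      ⟨ht0.1, le_rfl⟩ (Or.inl rfl) (Or.inr rfl)
    obtain ⟨t, ht, v, hv, ht1, ht2, ht3⟩ := side t0 1 1 ht0.1 ht0.2 le_rfl ⟨ht0.2, le_rfl⟩
      ⟨le_rfl, ht0.2⟩ (Or.inr rfl) (Or.inl rfl)
    obtain ⟨w, hw, hpw⟩ := hB x y s t0 t hs.1 hs.2 ht.1 ht.2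
    rw [← hp] at hpw
    set a := η x y s
    set b := η x y t
    have hlog := hc_log D hD (fun x y => η x y '' Icc (0:ℝ) 1) hA hC k
    have hkey : ∃ q, R ≤ dist p q ∧ ∃ w'', dist w w'' ≤ 2 * D ∧ dist w'' q ≤ D * (k + 1) := by
      rcases hC _ _ (f u) w hw with ⟨w', hw', hd⟩ | ⟨w', hw', hd⟩
      · obtain ⟨c, c0, c1, c2, c3⟩ := hc_ball hX a (f u)
        obtain ⟨τ, hτ, hh⟩ := hlog c _ (by linarith) c3 w' (by simpa only [c0, c1] using hw')
        exact ⟨c τ, hs3 _ (c2 τ hτ).1, w', by linarith, hh⟩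
      rcases hC _ _ (f v) w' hw' with ⟨w'', hw'', hd'⟩ | ⟨w'', hw'', hd'⟩
      · obtain ⟨c, c0, c1, c2, c3⟩ := hc_seg hf hu hv
        have hL : dist (f u) (f v) ≤ 6 * R := by
          have e1 := dist_triangle (f u) a (f v)
          have e2 := dist_triangle a p (f v)
          have e3 := dist_triangle p b (f v)
          rw [dist_comm (f u) a] at e1
          rw [dist_comm p b] at e3
          linarith
        obtain ⟨τ, hτ, hh⟩ := hlog c _ (by linarith) c3 w'' (by simpa only [c0, c1] using hw'')
        exact ⟨c τ, hRG _ (c2 τ hτ), w'', by linarith [dist_triangle w w' w''], hh⟩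
      · obtain ⟨c, c0, c1, c2, c3⟩ := hc_ball hX (f v) b
        have e := dist_comm (f v) b
        obtain ⟨τ, hτ, hh⟩ := hlog c _ (by linarith) c3 w'' (by simpa only [c0, c1] using hw'')
        exact ⟨c τ, ht3 _ (by linarith [(c2 τ hτ).2]), w'',
          by linarith [dist_triangle w w' w''], hh⟩
    obtain ⟨q, hq, w'', e1, e2⟩ := hkey
    have := dist_triangle p w q
    have := dist_triangle w w'' q
    linarith
  rintro _ ⟨t, ht, rfl⟩
  obtain ⟨g, hg, hg'⟩ := hGc.exists_infDist_eq_dist hne (η x y t)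
  have e1 := hmax' t ht
  have e2 := hc_mem hf hg
  have e3 := dist_triangle x g (η x y t)
  have e4 := dist_triangle (η x y t) g y
  rw [dist_comm g (η x y t)] at e3
  linarith

/-- Bowditch–Hamenstädt hyperbolicity criterion: if a geodesic
metric space admits a family of paths `η(x,y)` satisfying (a), (b), (c) with
constant `D`, then it is `δ`-hyperbolic for some `δ` depending only on `D`. -/
theorem hyperbolicity_criterion :
    ∀ D : ℝ, 0 < D → ∃ δ > (0 : ℝ), ∀ (X : Type*) [MetricSpace X],
      IsGeodesicSpace X →
      ∀ η : X → X → ℝ → X,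
        (∀ x y : X, ContinuousOn (η x y) (Icc (0 : ℝ) 1)) →
        (∀ x y : X, η x y 0 = x) → (∀ x y : X, η x y 1 = y) →
        (∀ x y : X, dist x y ≤ 1 → Metric.diam (η x y '' Icc (0 : ℝ) 1) ≤ D) →
        (∀ x y : X, ∀ s t : ℝ, 0 ≤ s → s ≤ t → t ≤ 1 →
          hausdorffDist (η x y '' Icc s t)
            (η (η x y s) (η x y t) '' Icc (0 : ℝ) 1) ≤ D) →
        (∀ x y z : X, η x y '' Icc (0 : ℝ) 1 ⊆
          cthickening D ((η x z '' Icc (0 : ℝ) 1) ∪ (η z y '' Icc (0 : ℝ) 1))) →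
        ∀ x y z v : X,
          (dist x v + dist y v - dist x y) / 2 ≥
            min ((dist x v + dist z v - dist x z) / 2)
              ((dist z v + dist y v - dist z y) / 2) - 2 * δ := by
  intro D hD
  obtain ⟨R, hR, H⟩ := hc_main D hD
  refine ⟨3 * (D + R) / 2, by positivity, ?_⟩
  intro X _ hX η hcont h0 h1 ha hb hc x y z v
  have hcpt : ∀ x y, IsCompact (η x y '' Icc (0:ℝ) 1) := fun x y =>
    isCompact_Icc.image_of_continuousOn (hcont x y)
  have hnon : ∀ x y, (η x y '' Icc (0:ℝ) 1).Nonempty := fun x y => ⟨_, 0, by simp, rfl⟩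
  have hx : ∀ x y, x ∈ η x y '' Icc (0:ℝ) 1 := fun x y => ⟨0, by simp, h0 x y⟩
  have hy : ∀ x y, y ∈ η x y '' Icc (0:ℝ) 1 := fun x y => ⟨1, by simp, h1 x y⟩
  have hC : ∀ x y z, ∀ p ∈ η x y '' Icc (0:ℝ) 1, (∃ w ∈ η x z '' Icc (0:ℝ) 1, dist p w ≤ D) ∨
      (∃ w ∈ η z y '' Icc (0:ℝ) 1, dist p w ≤ D) := by
    intro x y z p hp
    have := hc x y z hp
    rw [((hcpt x z).union (hcpt z y)).cthickening_eq_biUnion_closedBall hD.le] at this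
    simp only [mem_iUnion, mem_closedBall] at this
    obtain ⟨w, hw | hw, h⟩ := this
    · exact Or.inl ⟨w, hw, h⟩
    · exact Or.inr ⟨w, hw, h⟩
  have M := H X hX η hcont h0 h1 (fun x y hxy p hp =>
      (dist_le_diam_of_mem (hcpt x y).isBounded hp (hx x y)).trans (ha x y hxy)) (by
    intro x y s r t hs hsr hrt ht
    have hsub : Icc s t ⊆ Icc (0:ℝ) 1 := Icc_subset_Icc hs ht
    have hK : IsCompact (η x y '' Icc s t) :=
      isCompact_Icc.image_of_continuousOn ((hcont x y).mono hsub)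
    have hm : η x y r ∈ η x y '' Icc s t := ⟨r, ⟨hsr, hrt⟩, rfl⟩
    obtain ⟨w, hw, hw'⟩ := (hcpt (η x y s) (η x y t)).exists_infDist_eq_dist (hnon _ _) (η x y r)
    refine ⟨w, hw, ?_⟩
    rw [← hw']
    refine (infDist_le_hausdorffDist_of_mem hm ?_).trans (hb x y s t hs (hsr.trans hrt) ht)
    exact hausdorffEDist_ne_top_of_nonempty_of_bounded ⟨_, hm⟩ (hnon _ _) hK.isBounded
      (hcpt _ _).isBounded) hC
  have hconn : IsPreconnected (η x y '' Icc (0:ℝ) 1) := isPreconnected_Icc.image _ (hcont x y)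
  have hcl : ∀ x y, IsClosed {w | infDist w (η x y '' Icc (0:ℝ) 1) ≤ D} := fun x y =>
    isClosed_le (continuous_infDist_pt _) continuous_const
  obtain ⟨w, hw, hw1, hw2⟩ := isPreconnected_closed_iff.1 hconn _ _ (hcl x v) (hcl v y)
    (by
      intro p hp
      rcases hC x y v p hp with ⟨w, hw, h⟩ | ⟨w, hw, h⟩
      · exact Or.inl ((infDist_le_dist_of_mem hw).trans h)
      · exact Or.inr ((infDist_le_dist_of_mem hw).trans h))
    ⟨x, hx x y, by simp [infDist_zero_of_mem (hx x v), hD.le]⟩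
    ⟨y, hy x y, by simp [infDist_zero_of_mem (hy v y), hD.le]⟩
  obtain ⟨w1, hm1, e1⟩ := (hcpt x v).exists_infDist_eq_dist (hnon _ _) w
  obtain ⟨w2, hm2, e2⟩ := (hcpt v y).exists_infDist_eq_dist (hnon _ _) w
  simp only [mem_ofPred_eq, e1] at hw1
  simp only [mem_ofPred_eq, e2] at hw2
  have a1 := M _ _ _ hm1
  have a2 := M _ _ _ hm2
  have b1 := dist_triangle_right x w w1
  have b2 := dist_triangle w w1 v
  have b3 := dist_triangle_left v w w2
  have b4 := dist_triangle w w2 y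
  have b5 := dist_triangle x w y
  have b3' := dist_triangle v w2 w
  have c1 := dist_comm w2 w
  have c2 := dist_comm v w
  have c3 := dist_comm v y
  have c4 := dist_comm v z
  have c5 := dist_comm v x
  have key : dist w v ≤ (dist x v + dist y v - dist x y) / 2 + 2 * (D + R) := by linarith
  have low : ∀ x y w', w' ∈ η x y '' Icc (0:ℝ) 1 → dist w w' ≤ D →
      (dist x v + dist y v - dist x y) / 2 ≤ dist w v + D + R := by
    intro x y w' hw' hd
    have := M _ _ _ hw'
    have d1 := dist_triangle x w' v
    have d2 := dist_triangle y w' v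
    have d3 := dist_triangle_left w' v w
    have d4 := dist_comm y w'
    linarith
  rcases hC x y z w hw with ⟨w', hw', hd⟩ | ⟨w', hw', hd⟩
  · have := low _ _ _ hw' hd
    have := min_le_left ((dist x v + dist z v - dist x z) / 2)
              ((dist z v + dist y v - dist z y) / 2)
    linarith
  · have := low _ _ _ hw' hd
    have := min_le_right ((dist x v + dist z v - dist x z) / 2)
              ((dist z v + dist y v - dist z y) / 2)
    linarith
end

section
/- P satisfies axiom (P6) if and only if P satisfies axiom (P6'), where (P6'): for all x, y ∈ P with xy ∉ P, if there exists a ∈ P with ax ∈ P and (ax)y ∈ P, then ax ∈ B_P. -/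
open Metric Set

/-- Axiom (P6'). -/
def AxiomP6' {G : Type*} [Group G] (P : Set G) : Prop :=
  ∀ x ∈ P, ∀ y ∈ P, x * y ∉ P → ∀ a ∈ P, a * x ∈ P → a * x * y ∈ P → a * x ∈ BP P

theorem BP_inv_aux {G : Type*} [Group G] (P : Set G) (hP : IsPregroupStructure P)
    {b : G} (hb : b ∈ BP P) : b⁻¹ ∈ BP P := by
  refine ⟨hP.inv_mem _ hb.1, fun z hz => ⟨?_, ?_⟩⟩
  · have := hP.inv_mem _ (hb.2 _ (hP.inv_mem _ hz)).2
    simpa using this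
  · have := hP.inv_mem _ (hb.2 _ (hP.inv_mem _ hz)).1
    simpa using this

/-- axioms (P6) and (P6') are equivalent. -/
theorem axiomP6_iff_axiomP6' {G : Type*} [Group G]
    (P : Set G) (hP : IsPregroupStructure P) :
    AxiomP6 P ↔ AxiomP6' P := by
  constructor
  · intro h x hx y hy hxy a ha hax haxy
    have := BP_inv_aux P hP (h x hx y hy hxy (a * x)⁻¹ (hP.inv_mem _ hax)
      (by simpa using hP.inv_mem _ ha) (by simpa using haxy))
    simpa using this
  · intro h x hx y hy hxy a ha hxa hay
    have := BP_inv_aux P hP (h x hx y hy hxy (x * a)⁻¹ (hP.inv_mem _ hxa)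
      (by simpa using hP.inv_mem _ ha) (by simpa using hay))
    simpa using this
end
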